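/- Let n ≥ 4 be even, p a prime, and f_0 ∈ ℤ_p nonzero. The p-adic density, within the set F_{n,prim}(f_0,ℤ_p) of separable primitive binary forms of degree n over ℤ_p with leading coefficient f_0, of the subset of evenly ramified forms equals p^{-n/2} if v_p(f_0) = 0, and equals 1/(p^{n/2} + 1) if v_p(f_0) > 0. The p-adic density, within the set F_{n,max}(f_0,ℤ_p) of forms with R_F maximal, of the subset of evenly ramified forms equals p^{-n/2}·(1 + p^{-1})^{-1} if v_p(f_0) ∈ {0,1}, and equals 0 if v_p(f_0) > 1. -/

import Mathlib

open Polynomial Matrix MeasureTheory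
open scoped Classical
noncomputable section
namespace BHS



/-! ### Binary forms and the rings they cut out, over a general base -/

variable (R K : Type) [CommRing R] [Field K] [Algebra R K]

/-- The one-variable polynomial `F(x,1)` of the binary form of degree `n` with
coefficient vector `c` (so `F(x,z) = ∑ c i · x^(n-i) · z^i`), over `K`. -/
def binPoly (n : ℕ) (c : ℕ → R) : Polynomial K :=
  ∑ i ∈ Finset.range (n + 1), Polynomial.C (algebraMap R K (c i)) * Polynomial.X ^ (n - i)

/-- The étale algebra `K_F = K[x]/(F(x,1))`. -/
abbrev KF (n : ℕ) (c : ℕ → R) : Type := AdjoinRoot (binPoly R K n c)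

/-- θ, the image of x in K_F. -/
def θF (n : ℕ) (c : ℕ → R) : KF R K n c := AdjoinRoot.root _

/-- `ζ_i = ∑_{j<i} f_j θ^{i-j}`. -/
def ζF (n : ℕ) (c : ℕ → R) (i : ℕ) : KF R K n c :=
  ∑ j ∈ Finset.range i, algebraMap R (KF R K n c) (c j) * θF R K n c ^ (i - j)

/-- The ring `R_F`, as the free `R`-submodule of `K_F` with basis `1, ζ_1, …, ζ_{n-1}`
(a subring by Nakagawa's theorem). -/
def RFmod (n : ℕ) (c : ℕ → R) : Submodule R (KF R K n c) :=
  Submodule.span R ({1} ∪ {x | ∃ i, 1 ≤ i ∧ i ≤ n - 1 ∧ x = ζF R K n c i})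

/-- The fractional ideal `I_F^k`, as the free `R`-submodule of `K_F` with basis
`1, θ, …, θ^k, ζ_{k+1}, …, ζ_{n-1}`. -/
def IFmod (n : ℕ) (c : ℕ → R) (k : ℕ) : Submodule R (KF R K n c) :=
  Submodule.span R ({x | ∃ j ≤ k, x = θF R K n c ^ j} ∪
    {x | ∃ i, k + 1 ≤ i ∧ i ≤ n - 1 ∧ x = ζF R K n c i})

/-- `R_F` is the maximal order (the integral closure of `R`) in `K_F`. -/
def IsMaxOrder (n : ℕ) (c : ℕ → R) : Prop :=
  RFmod R K n c = Subalgebra.toSubmodule (integralClosure R (KF R K n c))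

/-- `M` is stable under multiplication by `R_F`, i.e. `M` is an `R_F`-submodule of `K_F`. -/
def IsStable (n : ℕ) (c : ℕ → R) (M : Submodule R (KF R K n c)) : Prop :=
  ∀ ρ ∈ RFmod R K n c, ∀ x ∈ M, ρ * x ∈ M

/-- `M` is an invertible fractional ideal of `R_F`. -/
def IsInvIdeal (n : ℕ) (c : ℕ → R) (M : Submodule R (KF R K n c)) : Prop :=
  IsStable R K n c M ∧
    ∃ N : Submodule R (KF R K n c), IsStable R K n c N ∧ M * N = RFmod R K n c

/-- The principal fractional ideal of `R_F` generated by `α`. -/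
def principal (n : ℕ) (c : ℕ → R) (α : KF R K n c) : Submodule R (KF R K n c) :=
  Submodule.span R {α} * RFmod R K n c

/-- `ρ` is a unit of the order `R_F`. -/
def IsUnitRF (n : ℕ) (c : ℕ → R) (ρ : KF R K n c) : Prop :=
  ρ ∈ RFmod R K n c ∧ ∃ σ ∈ RFmod R K n c, ρ * σ = 1

/-- `#R_F^×[2]`, the number of 2-torsion units of `R_F`. -/
def twoTorsUnitsCount (n : ℕ) (c : ℕ → R) : ℕ :=
  Nat.card {ρ : KF R K n c // ρ ∈ RFmod R K n c ∧ ρ ^ 2 = 1}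

/-- The number of 2-torsion elements of the ideal class group `Cl(R_F)`: the number of
invertible fractional ideals of `R_F` whose square is principal, counted modulo
principal fractional ideals. -/
def clTwoCount (n : ℕ) (c : ℕ → R) : ℕ :=
  Nat.card (Quot (fun (I J : {M : Submodule R (KF R K n c) //
      IsInvIdeal R K n c M ∧
        ∃ α : KF R K n c, IsUnit α ∧ M * M = principal R K n c α}) =>
    ∃ α : KF R K n c, IsUnit α ∧
      (I : Submodule R (KF R K n c)) =
        Submodule.span R {α} * (J : Submodule R (KF R K n c))))

/-- `α ∈ K_F` is totally positive: positive under every real embedding. -/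
def TotPos (n : ℕ) (c : ℕ → R) (α : KF R K n c) : Prop :=
  ∀ φ : KF R K n c →+* ℝ, 0 < φ α

/-- The number of 2-torsion elements of the narrow class group `Cl⁺(R_F)`. -/
def clTwoCountPlus (n : ℕ) (c : ℕ → R) : ℕ :=
  Nat.card (Quot (fun (I J : {M : Submodule R (KF R K n c) //
      IsInvIdeal R K n c M ∧
        ∃ α : KF R K n c, IsUnit α ∧ TotPos R K n c α ∧ M * M = principal R K n c α}) =>
    ∃ α : KF R K n c, IsUnit α ∧ TotPos R K n c α ∧
      (I : Submodule R (KF R K n c)) =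
        Submodule.span R {α} * (J : Submodule R (KF R K n c))))

/-- The order of the ideal class group of `R_F`. -/
def clCount (n : ℕ) (c : ℕ → R) : ℕ :=
  Nat.card (Quot (fun (I J : {M : Submodule R (KF R K n c) // IsInvIdeal R K n c M}) =>
    ∃ α : KF R K n c, IsUnit α ∧
      (I : Submodule R (KF R K n c)) =
        Submodule.span R {α} * (J : Submodule R (KF R K n c))))

/-- The order of the narrow class group of `R_F`. -/
def clCountPlus (n : ℕ) (c : ℕ → R) : ℕ :=
  Nat.card (Quot (fun (I J : {M : Submodule R (KF R K n c) // IsInvIdeal R K n c M}) =>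
    ∃ α : KF R K n c, IsUnit α ∧ TotPos R K n c α ∧
      (I : Submodule R (KF R K n c)) =
        Submodule.span R {α} * (J : Submodule R (KF R K n c))))




/-! ### p-adic machinery -/

variable (p : ℕ) [Fact p.Prime]

instance : MeasurableSpace ℤ_[p] := borel _
instance : BorelSpace ℤ_[p] := ⟨rfl⟩

/-- Haar probability measure on `ℤ_p^n`. -/
def haarP (n : ℕ) : Measure (Fin n → ℤ_[p]) :=
  Measure.addHaarMeasure ⟨⟨Set.univ, isCompact_univ⟩, by rw [interior_univ]; exact Set.univ_nonempty⟩

/-- The `p`-adic density of `A` within `B` (subsets of the coefficient space `ℤ_p^n`). -/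
def densIn (n : ℕ) (A B : Set (Fin n → ℤ_[p])) : ℝ :=
  (haarP p n A).toReal / (haarP p n B).toReal

/-- The coefficient vector of the degree-`n` binary form with leading coefficient `f0` and
remaining coefficients `v`. -/
def consF0 (n : ℕ) (f0 : ℤ_[p]) (v : Fin n → ℤ_[p]) : ℕ → ℤ_[p] :=
  fun j => if j = 0 then f0 else if h : j - 1 < n then v ⟨j - 1, h⟩ else 0

/-- The reduction of the binary form with coefficients `c` modulo `p`, as a polynomial in
two variables `x = X 0`, `z = X 1` over `F_p`. -/
def redForm (n : ℕ) (c : ℕ → ℤ_[p]) : MvPolynomial (Fin 2) (ZMod p) :=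
  ∑ i ∈ Finset.range (n + 1),
    MvPolynomial.C (PadicInt.toZMod (c i)) * MvPolynomial.X 0 ^ (n - i) * MvPolynomial.X 1 ^ i

/-- `F` is squareful over `ℤ_p`: `F ≡ κ·z^{e}·H² (mod p)` with `e > 0`, `κ ∈ F_p^×` and
`H` a monic binary form over `F_p` (hence not divisible by `z`). -/
def SquarefulP (n : ℕ) (c : ℕ → ℤ_[p]) : Prop :=
  ∃ (κ : (ZMod p)ˣ) (e d : ℕ) (H : MvPolynomial (Fin 2) (ZMod p)),
    0 < e ∧ H.IsHomogeneous d ∧ MvPolynomial.coeff (Finsupp.single 0 d) H = 1 ∧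
    redForm p n c = MvPolynomial.C (κ : ZMod p) * MvPolynomial.X 1 ^ e * H ^ 2

/-- `F` is evenly ramified over `ℤ_p`: `F ≡ κ·H² (mod p)` with `κ ∈ F_p^×`. -/
def EvenRamP (n : ℕ) (c : ℕ → ℤ_[p]) : Prop :=
  ∃ (κ : (ZMod p)ˣ) (H : MvPolynomial (Fin 2) (ZMod p)),
    redForm p n c = MvPolynomial.C (κ : ZMod p) * H ^ 2

/-- `F` is primitive over `ℤ_p`: its coefficients generate the unit ideal. -/
def PrimP (n : ℕ) (c : ℕ → ℤ_[p]) : Prop := ∃ i ≤ n, IsUnit (c i)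

/-- `F` is separable (of degree `n`) over `ℚ_p`. -/
def SepDegP (n : ℕ) (c : ℕ → ℤ_[p]) : Prop :=
  (binPoly ℤ_[p] ℚ_[p] n c).Separable ∧ (binPoly ℤ_[p] ℚ_[p] n c).natDegree = n

/-- The determinant of the Sylvester matrix of `F(x,1)` (of formal degree n) and
`F'(x,1)` (of formal degree n-1); it equals `±f_0` times the discriminant of the form. -/
def sylvDet (S : Type) [CommRing S] (n : ℕ) (c : ℕ → S) : S :=
  Matrix.det (Matrix.of (fun (i j : Fin (n + (n - 1))) =>
    if (i : ℕ) < n - 1 then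
      (if (i : ℕ) ≤ (j : ℕ) ∧ (j : ℕ) ≤ (i : ℕ) + n then c ((j : ℕ) - (i : ℕ)) else 0)
    else
      (if (i : ℕ) - (n - 1) ≤ (j : ℕ) ∧ (j : ℕ) ≤ ((i : ℕ) - (n - 1)) + (n - 1) then
        ((n - ((j : ℕ) - ((i : ℕ) - (n - 1))) : ℕ) : S) * c ((j : ℕ) - ((i : ℕ) - (n - 1)))
      else 0)))

/-- The discriminant of the form with coefficients `c` is not divisible by `p²`. -/
def DiscOK (n : ℕ) (c : ℕ → ℤ_[p]) : Prop :=
  ¬ ((p : ℤ_[p]) ^ 2 * c 0 ∣ sylvDet ℤ_[p] n c)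

/-- The reduction modulo `p` of the degree-`n` binary form with coefficients `c` is a
separable binary form over `F_p`. -/
def SepFormModP (n : ℕ) (c : ℕ → ℤ_[p]) : Prop :=
  (∑ i ∈ Finset.range (n + 1),
      Polynomial.C (PadicInt.toZMod (c i)) * (Polynomial.X : Polynomial (ZMod p)) ^ (n - i)).Separable ∧
  n - 1 ≤ (∑ i ∈ Finset.range (n + 1),
      Polynomial.C (PadicInt.toZMod (c i)) * (Polynomial.X : Polynomial (ZMod p)) ^ (n - i)).natDegree

/-!
Let `P = F(x, 1)` and write `P = B * D ^ 2 + p * G` with `B` squarefree modulo `p`. If `p ^ 2 ∤ f₀`,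
Dedekind's criterion says that `R_F` is maximal exactly when `D` and `G` are coprime modulo `p`.
Once the reduction of `F` is fixed, `G` modulo `p` is governed by the second `p`-adic digits of the
coefficients, which are equidistributed, so the proportion of maximal forms with this reduction is
the proportion of units in `𝔽_p[x] / (D)`. An evenly ramified form is one with constant `B`.

Counting coprime pairs of monic polynomials gives `p ^ d - p ^ (d - 1)` for the sum of these
proportions over the monic `D` of degree `d`, and `p ^ d - p ^ (d - 2)` for the sum over the square
parts of all monic polynomials of degree `d ≥ 2`. If `p ∣ f₀`, the reduction of `P` runs through all
nonzero polynomials of degree less than `n`, and the sums over the possible degrees telescope.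

An evenly ramified form of even degree with `p ∣ f₀` has `p ∣ f₁`. If moreover `p ^ 2 ∣ f₀`, then
`R_F` fails Dedekind's criterion at infinity, so no maximal form is evenly ramified.
-/

/-! ### Integrality and the conductor of an integral element -/

lemma isIntegral_of_fg_of_mul_mem {S A : Type*} [CommRing S] [CommRing A] [Algebra S A]
    {N : Submodule S A} (hN : N.FG) {u x : A} (hu : IsUnit u) (huN : u ∈ N)
    (hx : ∀ a ∈ N, x * a ∈ N) : IsIntegral S x := by
  have : Module.Finite S N := .of_fg hN
  have hmul : ∀ a ∈ N, LinearMap.mulLeft S x a ∈ N := hx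
  obtain ⟨f, hf, hfe⟩ :=
    LinearMap.exists_monic_and_aeval_eq_zero S ((LinearMap.mulLeft S x).restrict hmul)
  have hpow (i : ℕ) (a : N) : (((LinearMap.mulLeft S x).restrict hmul ^ i) a : A) = x ^ i * a := by
    induction i with
    | zero => simp
    | succ i ih =>
      rw [pow_succ', Module.End.mul_apply, LinearMap.coe_restrict_apply, ih,
        LinearMap.mulLeft_apply, pow_succ', mul_assoc]
  have hfx : aeval x f * u = (aeval ((LinearMap.mulLeft S x).restrict hmul) f ⟨u, huN⟩ : N) := by
    simp [aeval_eq_sum_range, Finset.sum_mul, hpow]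
  refine ⟨f, hf, hu.mul_left_eq_zero.mp ?_⟩
  rw [← aeval_def, hfx, hfe, LinearMap.zero_apply, Submodule.coe_zero]

lemma isIntegral_of_mul_mem_span {S A : Type*} [CommRing S] [CommRing A] [Algebra S A]
    {s : Set A} (hs : s.Finite) {u x : A} (hu : IsUnit u) (hus : u ∈ Submodule.span S s)
    (hx : ∀ a ∈ s, x * a ∈ Submodule.span S s) : IsIntegral S x := by
  refine isIntegral_of_fg_of_mul_mem (Submodule.fg_span hs) hu hus fun a ha ↦ ?_
  induction ha using Submodule.span_induction with
  | mem a ha => exact hx a ha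
  | zero => simp
  | add a b _ _ ha hb => simpa only [mul_add] using Submodule.add_mem _ ha hb
  | smul r a _ ha => simpa only [mul_smul_comm] using Submodule.smul_mem _ r ha

section Conductor

variable {S A : Type*} [CommRing S] [CommRing A] [Algebra S A]

/-- The conductor of `S[x]` in the image of `S` in `A`: the ideal of all `r : S` with
`r • S[x] ⊆ S`. -/
def adjoinConductor (S : Type*) {A : Type*} [CommRing S] [CommRing A] [Algebra S A] (x : A) :
    Ideal S :=
  (1 : Submodule S A).colon (Algebra.adjoin S {x} : Set A)

lemma mem_adjoinConductor {x : A} {r : S} :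
    r ∈ adjoinConductor S x ↔ ∀ z ∈ Algebra.adjoin S {x}, r • z ∈ (1 : Submodule S A) :=
  Submodule.mem_colon

lemma mem_adjoinConductor_of_algebraMap_eq_smul {x z : A} (hz : z ∈ Algebra.adjoin S {x}) {r s : S}
    (hr : r ∈ adjoinConductor S x) (hs : algebraMap S A s = r • z) : s ∈ adjoinConductor S x := by
  rw [mem_adjoinConductor] at hr ⊢
  intro w hw
  rw [Algebra.smul_def, hs, smul_mul_assoc]
  exact hr _ (mul_mem hz hw)

lemma adjoinConductor_ne_top {x : A} (hx : x ∉ (1 : Submodule S A)) : adjoinConductor S x ≠ ⊤ :=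
  fun h ↦ hx <| by
    simpa using mem_adjoinConductor.mp (h ▸ Submodule.mem_top : (1 : S) ∈ adjoinConductor S x) x
      (Algebra.self_mem_adjoin_singleton S x)

lemma ker_le_adjoinConductor (x : A) : RingHom.ker (algebraMap S A) ≤ adjoinConductor S x :=
  fun r hr ↦ mem_adjoinConductor.mpr fun z _ ↦ by
    rw [Algebra.smul_def, hr, zero_mul]
    exact zero_mem _

lemma exists_pow_mem_adjoinConductor {x : A} (hx : IsIntegral S x) {z : S}
    (hz : z • x ∈ (1 : Submodule S A)) : ∃ l, z ^ l ∈ adjoinConductor S x := by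
  obtain ⟨r, hr⟩ := Submodule.mem_one.mp hz
  obtain ⟨f, hf, hfx⟩ := hx
  refine ⟨f.natDegree, mem_adjoinConductor.mpr fun w hw ↦ ?_⟩
  rw [Algebra.adjoin_singleton_eq_range_aeval] at hw
  obtain ⟨g, rfl⟩ := hw
  have hmod : aeval x g = aeval x (g %ₘ f) := (aeval_modByMonic_eq_self_of_root hfx).symm
  rw [AlgHom.toRingHom_eq_coe, RingHom.coe_coe, hmod, aeval_eq_sum_range, Finset.smul_sum]
  refine Submodule.sum_mem _ fun i hi ↦ ?_
  obtain ⟨j, hj⟩ : ∃ j, f.natDegree = i + j := Nat.exists_eq_add_of_le <|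
    (Nat.lt_succ_iff.mp (Finset.mem_range.mp hi)).trans (natDegree_modByMonic_le g hf)
  refine Submodule.mem_one.mpr ⟨z ^ j * (g %ₘ f).coeff i * r ^ i, ?_⟩
  simp only [map_mul, map_pow, hr, hj, Algebra.smul_def]
  ring

lemma mem_of_algebraMap_eq_smul_of_isIntegral {m : Ideal S} (hm : m.IsPrime)
    (hker : RingHom.ker (algebraMap S A) ≤ m) {t : A} (ht : IsIntegral S t) {r s : S} (hr : r ∈ m)
    (hs : algebraMap S A s = r • t) : s ∈ m := by
  obtain ⟨f, hf, hft⟩ := ht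
  have hroot : (scaleRoots f r).eval s ∈ m := by
    refine hker (RingHom.mem_ker.mpr ?_)
    rw [← aeval_algebraMap_apply_eq_algebraMap_eval, hs, Algebra.smul_def]
    exact scaleRoots_aeval_eq_zero hft
  refine hm.mem_of_pow_mem f.natDegree ?_
  rw [← Ideal.Quotient.eq_zero_iff_mem] at hr hroot ⊢
  rw [← eval₂_hom, eval₂_eq_eval_map, map_scaleRoots _ _ _ (by simp [hf.leadingCoeff]), hr,
    scaleRoots_zero] at hroot
  simpa [hf.leadingCoeff, hf.natDegree_map, (hf.map _).ne_zero] using hroot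

/-- The multiplier `t` preserves the conductor, which contains a unit of `A`. Hence `t` is integral,
and then `t` cannot carry an element of `m` outside `m`. -/
theorem mem_one_of_forall_isMaximal [IsNoetherianRing S] {x : A} (hx : IsIntegral S x) {u : S}
    (hu : IsUnit (algebraMap S A u)) (hux : ∃ k, u ^ k • x ∈ (1 : Submodule S A))
    (H : ∀ m : Ideal S, m.IsMaximal → u ∈ m → RingHom.ker (algebraMap S A) ≤ m →
      ∃ t : A, (∀ r ∈ m, r • t ∈ (1 : Submodule S A)) ∧
        ∃ r ∈ m, ∃ s ∉ m, algebraMap S A s = r • t) :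
    x ∈ (1 : Submodule S A) := by
  by_contra hxS
  obtain ⟨m, hm, hcm⟩ := (adjoinConductor S x).exists_le_maximal (adjoinConductor_ne_top hxS)
  obtain ⟨k, hk⟩ := hux
  obtain ⟨l, hl⟩ := exists_pow_mem_adjoinConductor hx hk
  rw [← pow_mul] at hl
  have hker : RingHom.ker (algebraMap S A) ≤ m := (ker_le_adjoinConductor x).trans hcm
  obtain ⟨t, ht, r, hr, s, hs, hrs⟩ := H m hm (hm.isPrime.mem_of_pow_mem _ (hcm hl)) hker
  have htint : IsIntegral S t := by
    refine isIntegral_of_fg_of_mul_mem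
      (Submodule.FG.map (Algebra.linearMap S A) (IsNoetherian.noetherian (adjoinConductor S x)))
      (hu.pow (k * l)) ⟨_, hl, by simp⟩ ?_
    rintro _ ⟨r, hr, rfl⟩
    obtain ⟨s, hs⟩ := Submodule.mem_one.mp (ht r (hcm hr))
    refine ⟨s, mem_adjoinConductor.mpr fun z hz ↦ ?_, ?_⟩
    · obtain ⟨r', hr'⟩ := Submodule.mem_one.mp (mem_adjoinConductor.mp hr z hz)
      have hsz : s • z = r' • t := by
        rw [Algebra.smul_def, hs, Algebra.smul_def r', hr', smul_mul_assoc, smul_mul_assoc,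
          mul_comm]
      rw [hsz]
      exact ht r' (hcm (mem_adjoinConductor_of_algebraMap_eq_smul hz hr hr'))
    · rw [Algebra.linearMap_apply, Algebra.linearMap_apply, hs, Algebra.smul_def, mul_comm]
  exact hs (mem_of_algebraMap_eq_smul_of_isIntegral hm.isPrime hker htint hr hrs)

end Conductor

section LocalCriterion

variable {O A : Type*} [CommRing O] [CommRing A] [Algebra O A]

theorem mem_adjoin_singleton_of_forall_isMaximal [IsNoetherianRing O] {t x : A}
    (hx : IsIntegral O x) {u : O[X]} (hu : IsUnit (aeval t u))
    (hux : ∃ k, aeval t u ^ k * x ∈ Algebra.adjoin O {t})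
    (H : ∀ m : Ideal O[X], m.IsMaximal → u ∈ m → (∀ r, aeval t r = 0 → r ∈ m) →
      ∃ s : A, (∀ r ∈ m, aeval t r * s ∈ Algebra.adjoin O {t}) ∧
        ∃ r ∈ m, ∃ r' ∉ m, aeval t r' = aeval t r * s) :
    x ∈ Algebra.adjoin O {t} := by
  let _ := (aeval t : O[X] →ₐ[O] A).toRingHom.toAlgebra
  have : IsScalarTower O O[X] A := .of_algebraMap_eq fun r ↦ (aeval_C t r).symm
  have hone (z : A) : z ∈ (1 : Submodule O[X] A) ↔ z ∈ Algebra.adjoin O {t} := by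
    rw [Submodule.mem_one, Algebra.adjoin_singleton_eq_range_aeval]
    rfl
  have hsmul (r : O[X]) (z : A) : r • z = aeval t r * z := rfl
  rw [← hone]
  refine mem_one_of_forall_isMaximal hx.tower_top hu ?_ fun m hm hum hker ↦ ?_
  · simpa only [hone, hsmul, map_pow] using hux
  · obtain ⟨s, hs, h⟩ := H m hm hum hker
    exact ⟨s, fun r hr ↦ by rw [hone, hsmul]; exact hs r hr, h⟩

/-- The multiplier is `Y(t) / a = -Z(t) / φ(t)`. -/
lemma exists_multiplier {t : A} {a : O} (ha : IsUnit (algebraMap O A a)) {φ Y Z : O[X]}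
    (h0 : aeval t (φ * Y + C a * Z) = 0)
    (hYZ : Y ∉ Ideal.span {φ, C a} ∨ Z ∉ Ideal.span {φ, C a}) :
    ∃ s : A, (∀ r ∈ Ideal.span {φ, C a}, aeval t r * s ∈ Algebra.adjoin O {t}) ∧
      ∃ r ∈ Ideal.span {φ, C a}, ∃ r' ∉ Ideal.span {φ, C a}, aeval t r' = aeval t r * s := by
  obtain ⟨b, hb⟩ := ha.exists_right_inv
  have hY : aeval t Y = aeval t (C a) * (aeval t Y * b) := by
    rw [aeval_C]
    linear_combination -aeval t Y * hb
  have hZ : aeval t (-Z) = aeval t φ * (aeval t Y * b) := by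
    simp only [map_add, map_mul, aeval_C, map_neg] at h0 ⊢
    linear_combination (aeval t Z) * hb - b * h0
  refine ⟨aeval t Y * b, fun r hr ↦ ?_, ?_⟩
  · obtain ⟨v, w, rfl⟩ := Ideal.mem_span_pair.mp hr
    rw [map_add, map_mul, map_mul, add_mul, mul_assoc, mul_assoc, ← hY, ← hZ, ← map_mul,
      ← map_mul, ← map_add]
    exact aeval_mem_adjoin_singleton O t
  · rcases hYZ with h | h
    · exact ⟨C a, Ideal.mem_span_pair.mpr ⟨0, 1, by ring⟩, Y, h, hY⟩
    · exact ⟨φ, Ideal.mem_span_pair.mpr ⟨1, 0, by ring⟩, -Z, by rwa [neg_mem_iff], hZ⟩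

end LocalCriterion

lemma isUnit_iff_map_ne_zero {O k : Type*} [CommRing O] [IsLocalRing O] [Field k] {π : O →+* k}
    (hπ : Function.Surjective π) {x : O} : IsUnit x ↔ π x ≠ 0 := by
  rw [Ne, ← RingHom.mem_ker, IsLocalRing.ker_eq_maximalIdeal π hπ, IsLocalRing.mem_maximalIdeal,
    mem_nonunits_iff, not_not]

section Reduction

variable {O k : Type*} [CommRing O] [IsDomain O] [IsDiscreteValuationRing O] [Field k]
  {π : O →+* k} {ϖ : O}

lemma map_eq_zero_iff_dvd (hπ : Function.Surjective π) (hϖ : Irreducible ϖ) {x : O} :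
    π x = 0 ↔ ϖ ∣ x := by
  rw [← RingHom.mem_ker, IsLocalRing.ker_eq_maximalIdeal π hπ, hϖ.maximalIdeal_eq,
    Ideal.mem_span_singleton]

lemma polynomial_map_eq_zero_iff_C_dvd (hπ : Function.Surjective π) (hϖ : Irreducible ϖ)
    {r : O[X]} : r.map π = 0 ↔ C ϖ ∣ r := by
  simp [C_dvd_iff_dvd_coeff, Polynomial.ext_iff, map_eq_zero_iff_dvd hπ hϖ]

lemma exists_eq_mul_add_C_mul_of_map_dvd (hπ : Function.Surjective π) (hϖ : Irreducible ϖ)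
    {φ r : O[X]} (h : φ.map π ∣ r.map π) : ∃ e u, r = φ * e + C ϖ * u := by
  obtain ⟨e, he⟩ := h
  obtain ⟨e, rfl⟩ := map_surjective π hπ e
  have hsub : (r - φ * e).map π = 0 := by
    rw [Polynomial.map_sub, he, Polynomial.map_mul, sub_self]
  obtain ⟨u, hu⟩ := (polynomial_map_eq_zero_iff_C_dvd hπ hϖ).mp hsub
  exact ⟨e, u, by rw [← hu]; ring⟩

lemma map_C_uniformizer (hπ : Function.Surjective π) (hϖ : Irreducible ϖ) :
    (C ϖ).map π = 0 :=
  (polynomial_map_eq_zero_iff_C_dvd hπ hϖ).mpr dvd_rfl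

lemma mem_span_pair_iff_map_dvd (hπ : Function.Surjective π) (hϖ : Irreducible ϖ) {φ r : O[X]} :
    r ∈ Ideal.span {φ, C ϖ} ↔ φ.map π ∣ r.map π := by
  rw [Ideal.mem_span_pair]
  constructor
  · rintro ⟨a, b, rfl⟩
    simp [map_C_uniformizer hπ hϖ]
  · intro h
    obtain ⟨e, u, rfl⟩ := exists_eq_mul_add_C_mul_of_map_dvd hπ hϖ h
    exact ⟨e, u, by ring⟩

lemma exists_eq_span_pair (hπ : Function.Surjective π) (hϖ : Irreducible ϖ) {m : Ideal O[X]}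
    (hm : m.IsPrime) (hϖm : C ϖ ∈ m) {P : O[X]} (hPm : P ∈ m) (hP : P.map π ≠ 0) :
    ∃ φ : O[X], Prime (φ.map π) ∧ m = Ideal.span {φ, C ϖ} := by
  have hsurj : Function.Surjective (mapRingHom π) := map_surjective π hπ
  have hker : RingHom.ker (mapRingHom π) ≤ m := fun r hr ↦
    m.mem_of_dvd ((polynomial_map_eq_zero_iff_C_dvd hπ hϖ).mp hr) hϖm
  have hprime := Ideal.map_isPrime_of_surjective hsurj hker
  obtain ⟨g, hg⟩ := IsPrincipalIdealRing.principal (m.map (mapRingHom π))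
  obtain ⟨φ, rfl⟩ := hsurj g
  have hmem (r : O[X]) : r ∈ m ↔ φ.map π ∣ r.map π := by
    rw [← Ideal.mem_span_singleton, ← coe_mapRingHom, ← Ideal.submodule_span_eq, ← hg,
      ← Ideal.mem_comap, Ideal.comap_map_of_surjective' _ hsurj, sup_eq_left.mpr hker]
  refine ⟨φ, ?_, Ideal.ext fun r ↦ by rw [hmem, mem_span_pair_iff_map_dvd hπ hϖ]⟩
  have hφ0 : φ.map π ≠ 0 := fun h ↦ hP (zero_dvd_iff.mp (h ▸ (hmem P).mp hPm))
  rw [hg, Ideal.submodule_span_eq] at hprime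
  exact (Ideal.span_singleton_prime hφ0).mp hprime

end Reduction

section MaximalCriteria

variable {O k A : Type*} [CommRing O] [IsDomain O] [IsDiscreteValuationRing O] [Field k]
  {π : O →+* k} {ϖ : O} [CommRing A] [Algebra O A]

/-- Write `P = φY + ϖZ` at the maximal ideal `(φ, ϖ)`. If `φ ∣ D` modulo `ϖ` then `Z ≡ G`, which is
prime to `φ`; otherwise `φ` divides `B` exactly once and `Y` is prime to `φ`. -/
lemma exists_eq_mul_add_C_mul_of_isCoprime (hπ : Function.Surjective π) (hϖ : Irreducible ϖ)
    {B D G φ : O[X]} (hB : Squarefree (B.map π)) (hDG : IsCoprime (D.map π) (G.map π))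
    (hφ : Prime (φ.map π)) (hφP : φ.map π ∣ (B * D ^ 2 + C ϖ * G).map π) :
    ∃ Y Z, B * D ^ 2 + C ϖ * G = φ * Y + C ϖ * Z ∧
      (¬ φ.map π ∣ Y.map π ∨ ¬ φ.map π ∣ Z.map π) := by
  have hC := map_C_uniformizer hπ hϖ
  by_cases hD : φ.map π ∣ D.map π
  · obtain ⟨E, U, rfl⟩ := exists_eq_mul_add_C_mul_of_map_dvd hπ hϖ hD
    refine ⟨φ * B * E ^ 2, φ * (2 * B * E * U) + C ϖ * (B * U ^ 2) + G, by ring,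
      Or.inr fun hZ ↦ hφ.not_isUnit (hDG.isUnit_of_dvd' hD ?_)⟩
    rw [Polynomial.map_add, Polynomial.map_add, Polynomial.map_mul, Polynomial.map_mul (p := C ϖ),
      hC, zero_mul, add_zero] at hZ
    exact (dvd_add_right (dvd_mul_right _ _)).mp hZ
  · rw [Polynomial.map_add, Polynomial.map_mul, Polynomial.map_mul, hC, zero_mul, add_zero,
      Polynomial.map_pow] at hφP
    have hφB := (hφ.dvd_or_dvd hφP).resolve_right fun h ↦ hD (hφ.dvd_of_dvd_pow h)
    obtain ⟨E, U, rfl⟩ := exists_eq_mul_add_C_mul_of_map_dvd hπ hϖ hφB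
    refine ⟨E * D ^ 2, U * D ^ 2 + G, by ring, Or.inl fun hY ↦ ?_⟩
    rw [Polynomial.map_mul, Polynomial.map_pow] at hY
    have hφE := (hφ.dvd_or_dvd hY).resolve_right fun h ↦ hD (hφ.dvd_of_dvd_pow h)
    refine hφ.not_isUnit (hB _ ?_)
    rw [Polynomial.map_add, Polynomial.map_mul, Polynomial.map_mul, hC, zero_mul, add_zero]
    exact mul_dvd_mul_left _ hφE

theorem mem_adjoin_of_isIntegral_of_isCoprime (hπ : Function.Surjective π) (hϖ : Irreducible ϖ)
    (hϖA : IsUnit (algebraMap O A ϖ)) {B D G : O[X]} (hP : (B * D ^ 2 + C ϖ * G).map π ≠ 0)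
    (hB : Squarefree (B.map π)) (hDG : IsCoprime (D.map π) (G.map π)) {t x : A}
    (ht : aeval t (B * D ^ 2 + C ϖ * G) = 0) (hx : IsIntegral O x)
    (hϖx : ∃ k, algebraMap O A ϖ ^ k * x ∈ Algebra.adjoin O {t}) : x ∈ Algebra.adjoin O {t} := by
  refine mem_adjoin_singleton_of_forall_isMaximal hx (u := C ϖ) (by rwa [aeval_C])
    (by rwa [aeval_C]) fun m hm hϖm hker ↦ ?_
  obtain ⟨φ, hφ, rfl⟩ := exists_eq_span_pair hπ hϖ hm.isPrime hϖm (hker _ ht) hP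
  obtain ⟨Y, Z, hYZ, hor⟩ := exists_eq_mul_add_C_mul_of_isCoprime hπ hϖ hB hDG hφ
    ((mem_span_pair_iff_map_dvd hπ hϖ).mp (hker _ ht))
  refine exists_multiplier hϖA (by rwa [← hYZ]) ?_
  rwa [mem_span_pair_iff_map_dvd hπ hϖ, mem_span_pair_iff_map_dvd hπ hϖ]

theorem mem_adjoin_of_isIntegral_of_not_sq_dvd_coeff_zero (hϖ : Irreducible ϖ)
    (hϖA : IsUnit (algebraMap O A ϖ)) {P : O[X]} (hP : ¬ ϖ ^ 2 ∣ P.coeff 0) {y x : A}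
    (hy : IsUnit y) (hyP : aeval y P = 0) (hx : IsIntegral O x)
    (hyx : ∃ k, y ^ k * x ∈ Algebra.adjoin O {y}) : x ∈ Algebra.adjoin O {y} := by
  refine mem_adjoin_singleton_of_forall_isMaximal hx (u := X) (by rwa [aeval_X])
    (by rwa [aeval_X]) fun m hm hXm hker ↦ ?_
  have hcoeff {r : O[X]} (hr : r ∈ m) : C (r.coeff 0) ∈ m := by
    rw [← X_mul_divX_add r] at hr
    exact (Ideal.add_mem_iff_right _ (m.mul_mem_right _ hXm)).mp hr
  have hdvd {z : O} (hz : C z ∈ m) : ϖ ∣ z := by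
    rw [← Ideal.mem_span_singleton, ← hϖ.maximalIdeal_eq, IsLocalRing.mem_maximalIdeal]
    exact fun h ↦ hm.ne_top (m.eq_top_of_isUnit_mem hz (isUnit_C.mpr h))
  obtain ⟨v, hv⟩ := hdvd (hcoeff (hker _ hyP))
  have hvm : C v ∉ m := fun h ↦ hP <| by
    rw [hv, pow_two]
    exact mul_dvd_mul_left _ (hdvd h)
  have hϖm : C ϖ ∈ m := by
    have h := hcoeff (hker _ hyP)
    rw [hv, C_mul] at h
    exact (hm.isPrime.mem_or_mem h).resolve_right hvm
  obtain rfl : m = Ideal.span {X, C ϖ} := by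
    refine le_antisymm (fun r hr ↦ ?_) (Ideal.span_le.mpr
      (Set.insert_subset hXm (Set.singleton_subset_iff.mpr hϖm)))
    obtain ⟨w, hw⟩ := hdvd (hcoeff hr)
    refine Ideal.mem_span_pair.mpr ⟨r.divX, C w, ?_⟩
    conv_rhs => rw [← X_mul_divX_add r, hw, C_mul]
    ring
  refine exists_multiplier hϖA (Y := P.divX) (Z := C v) ?_ (Or.inr hvm)
  rwa [← C_mul, ← hv, X_mul_divX_add]

end MaximalCriteria

section Inverse

variable {O A : Type*} [CommRing O] [CommRing A] [Algebra O A] {t y : A}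

lemma pow_mul_aeval_eq_aeval_reflect (hty : t * y = 1) {g : O[X]} {N : ℕ} (hg : g.natDegree ≤ N) :
    y ^ N * aeval t g = aeval y (reflect N g) := by
  let _ : Invertible y := ⟨t, hty, mul_comm t y ▸ hty⟩
  have hg' : (reflect N g).natDegree ≤ N := natDegree_reflect_le.trans (max_le le_rfl hg)
  have hinv : ⅟y = t := invOf_eq_left_inv hty
  simpa only [reflect_reflect, ← aeval_def, mul_comm, hinv] using
    eval₂_reflect_mul_pow (algebraMap O A) y N (reflect N g) hg'

lemma pow_mul_aeval_reflect_eq_aeval (hty : t * y = 1) {g : O[X]} {N : ℕ} (hg : g.natDegree ≤ N) :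
    y ^ N * aeval t (reflect N g) = aeval y g := by
  rw [pow_mul_aeval_eq_aeval_reflect hty (natDegree_reflect_le.trans (max_le le_rfl hg)),
    reflect_reflect]

lemma mul_aeval_mem_span {z t : A} {f : O[X]} {m : ℕ} (hf : f.natDegree < m) :
    z * aeval t f ∈ Submodule.span O ((fun i ↦ z * t ^ i) '' (Finset.range m : Set ℕ)) := by
  rw [aeval_eq_sum_range' hf, Finset.mul_sum]
  refine Submodule.sum_mem _ fun i hi ↦ ?_
  rw [mul_smul_comm]
  exact Submodule.smul_mem _ _ (Submodule.subset_span ⟨i, hi, rfl⟩)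

theorem isIntegral_of_mem_adjoin_of_mem_adjoin_inv (hty : t * y = 1) {x : A}
    (hxt : x ∈ Algebra.adjoin O {t}) (hxy : x ∈ Algebra.adjoin O {y}) : IsIntegral O x := by
  obtain ⟨g, hg⟩ := Algebra.adjoin_mem_exists_aeval O t hxt
  obtain ⟨h, hh⟩ := Algebra.adjoin_mem_exists_aeval O y hxy
  set a := g.natDegree
  set b := h.natDegree
  set N := Submodule.span O ((fun i ↦ y ^ b * t ^ i) '' (Finset.range (a + b + 1) : Set ℕ))
  have hmem {f : O[X]} (hf : f.natDegree ≤ a + b) : y ^ b * aeval t f ∈ N :=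
    mul_aeval_mem_span (Nat.lt_succ_of_le hf)
  have hone : y ^ b ∈ N := by simpa using hmem (f := 1) (by simp)
  refine isIntegral_of_mul_mem_span ((Finset.finite_toSet _).image _)
    ((IsUnit.of_mul_eq_one t (mul_comm t y ▸ hty)).pow b) hone ?_
  rintro _ ⟨i, hi, rfl⟩
  have hi : i ≤ a + b := Nat.lt_succ_iff.mp (Finset.mem_range.mp hi)
  rcases le_total i b with hib | hbi
  · have hx : x * (y ^ b * t ^ i) = y ^ b * aeval t (g * X ^ i) := by
      rw [map_mul, hg, map_pow, aeval_X]
      ring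
    refine hx ▸ hmem (natDegree_mul_le.trans ?_)
    have := natDegree_X_pow_le (R := O) i
    omega
  · obtain ⟨j, rfl⟩ := Nat.exists_eq_add_of_le hbi
    have hx : x * (y ^ b * t ^ (b + j)) = y ^ b * aeval t (reflect b h * X ^ j) := by
      rw [map_mul, ← mul_assoc (y ^ b) (aeval t _), pow_mul_aeval_reflect_eq_aeval hty le_rfl, hh,
        map_pow, aeval_X, pow_add, ← mul_assoc (y ^ b), ← mul_pow, mul_comm y, hty, one_pow,
        one_mul]
    refine hx ▸ hmem (natDegree_mul_le.trans ?_)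
    have := natDegree_X_pow_le (R := O) j
    have := natDegree_reflect_le (N := b) (p := h)
    omega

end Inverse

section NonMaximalCriterion

variable {O k A : Type*} [CommRing O] [Field k] {π : O →+* k} {ϖ : O} [CommRing A] [Algebra O A]

lemma exists_natDegree_lt_of_eq_sq_add {φ a b e P : O[X]} (hφ : φ.Monic) (hφ1 : φ ≠ 1)
    (hP : P = φ ^ 2 * a + C ϖ * (φ * b) + C ϖ ^ 2 * e) :
    ∃ a' b' e', P = φ ^ 2 * a' + C ϖ * (φ * b') + C ϖ ^ 2 * e' ∧
      b'.natDegree < φ.natDegree ∧ e'.natDegree < φ.natDegree := by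
  refine ⟨a + C ϖ * ((b + C ϖ * (e /ₘ φ)) /ₘ φ), (b + C ϖ * (e /ₘ φ)) %ₘ φ, e %ₘ φ, ?_,
    natDegree_modByMonic_lt _ hφ hφ1, natDegree_modByMonic_lt _ hφ hφ1⟩
  have he := modByMonic_add_div e φ
  have hb := modByMonic_add_div (b + C ϖ * (e /ₘ φ)) φ
  rw [hP]
  linear_combination (-C ϖ * φ) * hb - C ϖ ^ 2 * he

/-- The lattice spanned by `φ(t) tⁱ` for `i < deg a + deg φ` and `ϖ tⁱ` for `i < deg φ` is stable
under `β`. -/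
lemma isIntegral_of_mul_eq_aeval {t β : A} {φ a b e : O[X]} (hφ : φ.Monic) (hφ1 : φ ≠ 1)
    (hb : b.natDegree < φ.natDegree) (he : e.natDegree < φ.natDegree)
    (hϖA : IsUnit (algebraMap O A ϖ)) (hβ : algebraMap O A ϖ * β = aeval t (φ * a + C ϖ * b))
    (hφβ : aeval t φ * β = -(algebraMap O A ϖ * aeval t e)) : IsIntegral O β := by
  set d := φ.natDegree
  set m := a.natDegree + d
  set N := Submodule.span O ((fun i ↦ aeval t φ * t ^ i) '' (Finset.range m : Set ℕ) ∪
    (fun i ↦ algebraMap O A ϖ * t ^ i) '' (Finset.range d : Set ℕ))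
  have hφN {f : O[X]} (hf : f.natDegree < m) : aeval t φ * aeval t f ∈ N :=
    Submodule.span_mono Set.subset_union_left (mul_aeval_mem_span hf)
  have hϖN {f : O[X]} (hf : f.natDegree < m + d) : algebraMap O A ϖ * aeval t f ∈ N := by
    have hdiv : algebraMap O A ϖ * aeval t f =
        algebraMap O A ϖ * aeval t (f %ₘ φ) + ϖ • (aeval t φ * aeval t (f /ₘ φ)) := by
      conv_lhs => rw [← modByMonic_add_div f φ]
      rw [map_add, map_mul, Algebra.smul_def]
      ring
    rw [hdiv]
    refine N.add_mem (Submodule.span_mono Set.subset_union_right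
      (mul_aeval_mem_span (natDegree_modByMonic_lt _ hφ hφ1))) (N.smul_mem _ (hφN ?_))
    rw [natDegree_divByMonic f hφ]
    omega
  have hone : algebraMap O A ϖ ∈ N := by
    simpa using hϖN (f := 1) (by rw [natDegree_one]; omega)
  refine isIntegral_of_mul_mem_span
    (((Finset.finite_toSet _).image _).union ((Finset.finite_toSet _).image _)) hϖA hone ?_
  have hX {f : O[X]} {i : ℕ} : (f * X ^ i).natDegree ≤ f.natDegree + i :=
    natDegree_mul_le.trans (Nat.add_le_add_left (natDegree_X_pow_le i) _)
  rintro _ (⟨i, hi, rfl⟩ | ⟨i, hi, rfl⟩)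
  · have hi : i < m := Finset.mem_range.mp hi
    have hz : β * (aeval t φ * t ^ i) = -(algebraMap O A ϖ * aeval t (e * X ^ i)) := by
      rw [map_mul, map_pow, aeval_X]
      linear_combination t ^ i * hφβ
    exact hz ▸ N.neg_mem (hϖN (by have := hX (f := e) (i := i); omega))
  · have hi : i < d := Finset.mem_range.mp hi
    have hz : β * (algebraMap O A ϖ * t ^ i) =
        aeval t φ * aeval t (a * X ^ i) + algebraMap O A ϖ * aeval t (b * X ^ i) := by
      simp only [map_add, map_mul, map_pow, aeval_X, aeval_C] at hβ ⊢
      linear_combination t ^ i * hβ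
    refine hz ▸ N.add_mem (hφN ?_) (hϖN ?_)
    · have := hX (f := a) (i := i)
      omega
    · have := hX (f := b) (i := i)
      omega

/-- The witness is `β = φ(t)a(t)/ϖ + b(t)`, where `P = φ²a + ϖφb + ϖ²e`. -/
theorem exists_isIntegral_notMem_adjoin (hϖ : π ϖ = 0) (hϖA : IsUnit (algebraMap O A ϖ)) {t : A}
    {φ a b e P : O[X]} (hφ : φ.Monic) (hφ1 : φ ≠ 1)
    (hP : P = φ ^ 2 * a + C ϖ * (φ * b) + C ϖ ^ 2 * e) (hP0 : P.map π ≠ 0)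
    (ht : ∀ r, aeval t r = 0 ↔ P ∣ r) : ∃ β, IsIntegral O β ∧ β ∉ Algebra.adjoin O {t} := by
  obtain ⟨a, b, e, rfl, hb, he⟩ := exists_natDegree_lt_of_eq_sq_add hφ hφ1 hP
  obtain ⟨c, hc⟩ := hϖA.exists_right_inv
  have h0 := (ht _).mpr dvd_rfl
  refine ⟨c * aeval t (φ * a + C ϖ * b),
    isIntegral_of_mul_eq_aeval hφ hφ1 hb he hϖA (by rw [← mul_assoc, hc, one_mul]) ?_, fun hβ ↦ ?_⟩
  · simp only [map_add, map_mul, map_pow, aeval_C] at h0 ⊢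
    linear_combination c * h0 - (algebraMap O A ϖ * aeval t e) * hc
  · obtain ⟨g, hg⟩ := Algebra.adjoin_mem_exists_aeval O t hβ
    have hdvd := (ht (φ * a + C ϖ * b - C ϖ * g)).mp <| by
      rw [map_sub, map_mul (aeval t) (C ϖ), hg, aeval_C, ← mul_assoc, hc, one_mul, sub_self]
    replace hdvd := Polynomial.map_dvd π hdvd
    simp only [Polynomial.map_add, Polynomial.map_sub, Polynomial.map_mul, Polynomial.map_pow,
      map_C, hϖ, map_zero, zero_mul, add_zero, sub_zero, ne_eq, zero_pow two_ne_zero] at hdvd hP0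
    rw [pow_two, mul_assoc] at hdvd
    have hunit := isUnit_of_dvd_one <|
      (mul_dvd_mul_iff_right ?_).mp (hdvd.trans (one_mul _).symm.dvd)
    · exact hφ1 (hφ.natDegree_eq_zero.mp
        ((hφ.natDegree_map π).symm.trans (natDegree_eq_zero_of_isUnit hunit)))
    · intro h
      exact hP0 (by rw [pow_two, mul_assoc, h, mul_zero])

end NonMaximalCriterion

/-! ### The ring of a binary form -/

lemma isPrimitive_of_map_ne_zero {O k : Type*} [CommRing O] [IsLocalRing O] [Field k]
    {π : O →+* k} (hπ : Function.Surjective π) {P : O[X]} (hP : P.map π ≠ 0) : P.IsPrimitive := by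
  intro r hr
  obtain ⟨Q, rfl⟩ := hr
  rw [isUnit_iff_map_ne_zero hπ]
  exact fun h ↦ hP (by rw [Polynomial.map_mul, map_C, h, map_zero, zero_mul])

section FormPoly

variable {S T : Type*} [CommRing S] [CommRing T]

/-- The dehomogenization `F(x, 1)` of a binary form `F` of degree `n`, over the base ring itself. -/
def formPoly (n : ℕ) (c : ℕ → S) : S[X] :=
  ∑ i ∈ Finset.range (n + 1), C (c i) * X ^ (n - i)

lemma coeff_formPoly (n : ℕ) (c : ℕ → S) (m : ℕ) :
    (formPoly n c).coeff m = if m ≤ n then c (n - m) else 0 := by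
  simp only [formPoly, finsetSum_coeff, coeff_C_mul, coeff_X_pow, mul_ite, mul_one, mul_zero]
  split_ifs with h
  · rw [Finset.sum_eq_single_of_mem (n - m) (Finset.mem_range.mpr (by omega))
      fun i hi hne ↦ if_neg (by have := Finset.mem_range.mp hi; omega)]
    exact if_pos (by omega)
  · exact Finset.sum_eq_zero fun i _ ↦ if_neg (by omega)

lemma natDegree_formPoly_le (n : ℕ) (c : ℕ → S) : (formPoly n c).natDegree ≤ n :=
  natDegree_le_iff_coeff_eq_zero.mpr fun m hm ↦ by rw [coeff_formPoly, if_neg (by omega)]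

lemma map_formPoly (f : S →+* T) (n : ℕ) (c : ℕ → S) :
    (formPoly n c).map f = formPoly n (f ∘ c) := by
  ext m
  rw [coeff_map, coeff_formPoly, coeff_formPoly]
  split_ifs <;> simp

/-- The polynomial whose value at `θ` is the basis element `ζᵢ` of the ring of the form. -/
def zetaPoly (c : ℕ → S) (i : ℕ) : S[X] :=
  ∑ j ∈ Finset.range i, C (c j) * X ^ (i - j)

lemma coeff_zetaPoly_zero (c : ℕ → S) (i : ℕ) : (zetaPoly c i).coeff 0 = 0 := by
  rw [zetaPoly, finsetSum_coeff]
  refine Finset.sum_eq_zero fun j hj ↦ ?_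
  rw [coeff_C_mul_X_pow, if_neg (by have := Finset.mem_range.mp hj; omega)]

lemma coeff_zetaPoly_succ {n l : ℕ} (c : ℕ → S) (m : ℕ) :
    (zetaPoly c (n - l)).coeff (m + 1) = (formPoly n c).coeff (m + 1 + l) := by
  simp only [coeff_formPoly, zetaPoly, finsetSum_coeff, coeff_C_mul, coeff_X_pow, mul_ite, mul_one,
    mul_zero]
  split_ifs with h
  · rw [Finset.sum_eq_single_of_mem (n - (m + 1 + l)) (Finset.mem_range.mpr (by omega))
      fun i hi hne ↦ if_neg (by have := Finset.mem_range.mp hi; omega)]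
    exact if_pos (by omega)
  · exact Finset.sum_eq_zero fun i _ ↦ if_neg (by omega)

lemma eq_C_add_sum_zetaPoly {n N : ℕ} {c : ℕ → S} {g h w : S[X]} (hh : h.natDegree ≤ N)
    (hw : w.natDegree < N) (hg : X ^ N * g = h + formPoly n c * w) :
    g = C (g.coeff 0) + ∑ i ∈ Finset.range N, C (w.coeff i) * zetaPoly c (n - (N - i)) := by
  ext m
  rcases m with _ | m
  · simp [finsetSum_coeff, coeff_zetaPoly_zero]
  · have hm : g.coeff (m + 1) = (formPoly n c * w).coeff (m + 1 + N) := by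
      rw [← coeff_X_pow_mul g N, hg, coeff_add, coeff_eq_zero_of_natDegree_lt (by omega), zero_add]
    rw [hm, coeff_add, coeff_C_succ, zero_add, finsetSum_coeff, mul_comm,
      as_sum_range_C_mul_X_pow' w hw, Finset.sum_mul, finsetSum_coeff]
    refine Finset.sum_congr rfl fun i hi ↦ ?_
    have hi := Finset.mem_range.mp hi
    rw [mul_assoc, coeff_C_mul, coeff_C_mul, coeff_zetaPoly_succ c,
      show m + 1 + N = m + 1 + (N - i) + i by omega, mul_comm (X ^ i), coeff_mul_X_pow]
    simp +contextual [finsetSum_coeff, hi]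

end FormPoly

section FormRing

variable {R K} {n : ℕ} {c : ℕ → R}

lemma map_formPoly_eq_binPoly : (formPoly n c).map (algebraMap R K) = binPoly R K n c := by
  rw [map_formPoly]
  rfl

lemma aeval_θF_formPoly : aeval (θF R K n c) (formPoly n c) = 0 := by
  rw [← aeval_map_algebraMap K, map_formPoly_eq_binPoly, θF, AdjoinRoot.aeval_eq,
    AdjoinRoot.mk_self]

lemma aeval_θF_zetaPoly (i : ℕ) : aeval (θF R K n c) (zetaPoly c i) = ζF R K n c i := by
  simp [zetaPoly, ζF]

lemma ζF_mem_RFmod {i : ℕ} (hi : i ≤ n - 1) : ζF R K n c i ∈ RFmod R K n c := by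
  rcases i with _ | i
  · simp [ζF]
  · exact Submodule.subset_span (Or.inr ⟨i + 1, by omega, hi, rfl⟩)

lemma ζF_mem_adjoin_inv {y : KF R K n c} (hy : θF R K n c * y = 1) {i : ℕ} (hi : i ≤ n) :
    ζF R K n c i ∈ Algebra.adjoin R {y} := by
  have hpow {a b : ℕ} : y ^ a * θF R K n c ^ (a + b) = θF R K n c ^ b := by
    rw [pow_add, ← mul_assoc, ← mul_pow, mul_comm y, hy, one_pow, one_mul]
  have hpow' {a b : ℕ} : y ^ (a + b) * θF R K n c ^ a = y ^ b := by
    rw [pow_add, mul_right_comm, ← mul_pow, mul_comm y, hy, one_pow, one_mul]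
  have hsum : ζF R K n c i + aeval y (∑ j ∈ Finset.Ico i (n + 1), C (c j) * X ^ (j - i)) =
      y ^ (n - i) * aeval (θF R K n c) (formPoly n c) := by
    rw [formPoly, ← Finset.sum_range_add_sum_Ico _ (hi.trans n.le_succ), map_add, mul_add, map_sum,
      map_sum, map_sum, Finset.mul_sum, Finset.mul_sum, ζF]
    congr 1 <;> refine Finset.sum_congr rfl fun j hj ↦ ?_
    · have := Finset.mem_range.mp hj
      rw [map_mul, aeval_C, map_pow, aeval_X, mul_left_comm,
        show n - j = n - i + (i - j) by omega, hpow]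
    · have := Finset.mem_Ico.mp hj
      simp only [map_mul, aeval_C, map_pow, aeval_X]
      rw [mul_left_comm, show n - i = n - j + (j - i) by omega, hpow']
  rw [aeval_θF_formPoly, mul_zero] at hsum
  rw [eq_neg_of_add_eq_zero_left hsum]
  exact neg_mem (aeval_mem_adjoin_singleton R y)

variable [IsFractionRing R K]

lemma aeval_θF_eq_zero_iff [IsDomain R] [IsGCDMonoid R] (hP : (formPoly n c).IsPrimitive)
    {g : R[X]} : aeval (θF R K n c) g = 0 ↔ formPoly n c ∣ g := by
  rw [hP.dvd_iff_fraction_map_dvd_fraction_map K, map_formPoly_eq_binPoly, ← AdjoinRoot.mk_eq_zero,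
    ← AdjoinRoot.aeval_eq, aeval_map_algebraMap, θF]

theorem mem_RFmod_of_mem_adjoin_of_mem_adjoin_inv [IsDomain R] [IsGCDMonoid R]
    (hP : (formPoly n c).IsPrimitive) {y : KF R K n c} (hy : θF R K n c * y = 1) {x : KF R K n c}
    (hxθ : x ∈ Algebra.adjoin R {θF R K n c}) (hxy : x ∈ Algebra.adjoin R {y}) :
    x ∈ RFmod R K n c := by
  obtain ⟨g, rfl⟩ := Algebra.adjoin_mem_exists_aeval R _ hxθ
  obtain ⟨h, hh⟩ := Algebra.adjoin_mem_exists_aeval R _ hxy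
  set N := h.natDegree + 1
  have hN : h.natDegree ≤ N := Nat.le_succ _
  have hdvd : formPoly n c ∣ X ^ N * g - reflect N h := by
    rw [← aeval_θF_eq_zero_iff (K := K) hP, map_sub, map_mul, map_pow, aeval_X, ← hh,
      ← pow_mul_aeval_reflect_eq_aeval hy hN, ← mul_assoc, ← mul_pow, hy, one_pow, one_mul,
      sub_self]
  obtain ⟨w, hw⟩ := hdvd
  have hw0 := natDegree_modByMonic_lt w (monic_X_pow (R := R) N)
    fun h ↦ by simpa using congrArg natDegree h
  rw [natDegree_X_pow] at hw0
  have hg : X ^ N * (g - formPoly n c * (w /ₘ X ^ N)) =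
      reflect N h + formPoly n c * (w %ₘ X ^ N) := by
    linear_combination hw - formPoly n c * modByMonic_add_div w (X ^ N)
  have hgθ : aeval (θF R K n c) g = aeval (θF R K n c) (g - formPoly n c * (w /ₘ X ^ N)) := by
    rw [map_sub, map_mul, aeval_θF_formPoly, zero_mul, sub_zero]
  rw [hgθ, eq_C_add_sum_zetaPoly (natDegree_reflect_le.trans (max_le le_rfl hN)) hw0 hg, map_add,
    map_sum, aeval_C, Algebra.algebraMap_eq_smul_one]
  refine add_mem (Submodule.smul_mem _ _ (Submodule.subset_span (Or.inl rfl)))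
    (sum_mem fun i hi ↦ ?_)
  have hi := Finset.mem_range.mp hi
  rw [map_mul, aeval_C, aeval_θF_zetaPoly, ← Algebra.smul_def]
  exact Submodule.smul_mem _ _ (ζF_mem_RFmod (by omega))

theorem mem_RFmod_iff [IsDomain R] [IsGCDMonoid R] (hP : (formPoly n c).IsPrimitive)
    {y : KF R K n c} (hy : θF R K n c * y = 1) {x : KF R K n c} :
    x ∈ RFmod R K n c ↔ x ∈ Algebra.adjoin R {θF R K n c} ∧ x ∈ Algebra.adjoin R {y} := by
  refine ⟨fun hx ↦ ?_, fun h ↦ mem_RFmod_of_mem_adjoin_of_mem_adjoin_inv hP hy h.1 h.2⟩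
  induction hx using Submodule.span_induction with
  | zero => exact ⟨zero_mem _, zero_mem _⟩
  | add a b _ _ ha hb => exact ⟨add_mem ha.1 hb.1, add_mem ha.2 hb.2⟩
  | smul r a _ ha => exact ⟨Subalgebra.smul_mem _ ha.1 r, Subalgebra.smul_mem _ ha.2 r⟩
  | mem a ha =>
    obtain rfl | ⟨i, -, hi, rfl⟩ := ha
    · exact ⟨one_mem _, one_mem _⟩
    · exact ⟨aeval_θF_zetaPoly (K := K) (n := n) (c := c) i ▸ aeval_mem_adjoin_singleton R _,
        ζF_mem_adjoin_inv hy (by omega)⟩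

end FormRing

lemma exists_monic_map_dvd_of_not_isCoprime {S k : Type*} [CommRing S] [Field k] {π : S →+* k}
    (hπ : Function.Surjective π) {D G : S[X]} (hD : D.map π ≠ 0)
    (h : ¬ IsCoprime (D.map π) (G.map π)) :
    ∃ φ : S[X], φ.Monic ∧ φ ≠ 1 ∧ φ.map π ∣ D.map π ∧ φ.map π ∣ G.map π := by
  set f := gcd (D.map π) (G.map π)
  have hf : f ≠ 0 := gcd_ne_zero_of_left hD
  obtain ⟨φ, hφf, -, hφ⟩ := lifts_and_natDegree_eq_and_monic
    (map_surjective π hπ (normalize f)) (monic_normalize hf)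
  refine ⟨φ, hφ, ?_, ?_, ?_⟩
  · rintro rfl
    rw [Polynomial.map_one, eq_comm, normalize_eq_one] at hφf
    exact h (gcd_isUnit_iff _ _ |>.mp hφf)
  · rw [hφf, normalize_dvd_iff]
    exact gcd_dvd_left _ _
  · rw [hφf, normalize_dvd_iff]
    exact gcd_dvd_right _ _

section MaximalOrder

variable {R K} {n : ℕ} {c : ℕ → R}

lemma isUnit_algebraMap_KF [IsFractionRing R K] {r : R} (hr : r ≠ 0) :
    IsUnit (algebraMap R (KF R K n c) r) := by
  rw [IsScalarTower.algebraMap_apply R K]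
  exact ((map_ne_zero_iff _ (IsFractionRing.injective R K)).mpr hr).isUnit.map _

lemma exists_θF_mul_eq_one [IsFractionRing R K] (hn : c n ≠ 0) : ∃ y, θF R K n c * y = 1 := by
  have h := aeval_θF_formPoly (K := K) (n := n) (c := c)
  rw [← X_mul_divX_add (formPoly n c), map_add, map_mul, aeval_X, aeval_C, coeff_formPoly,
    if_pos n.zero_le, Nat.sub_zero] at h
  obtain ⟨b, hb⟩ := (isUnit_algebraMap_KF (K := K) (n := n) (c := c) hn).exists_right_inv
  exact ⟨-(aeval (θF R K n c) (formPoly n c).divX * b), by linear_combination hb - b * h⟩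

variable [IsDomain R] [IsDiscreteValuationRing R] [IsFractionRing R K] {ϖ : R}

lemma exists_pow_mul_mem_adjoin_θF (hϖ : Irreducible ϖ) (x : KF R K n c) :
    ∃ m, algebraMap R (KF R K n c) ϖ ^ m * x ∈ Algebra.adjoin R {θF R K n c} := by
  obtain ⟨f, rfl⟩ := AdjoinRoot.mk_surjective x
  obtain ⟨b, hb, hbf⟩ := IsLocalization.integerNormalization_spec (nonZeroDivisors R) f
  obtain ⟨m, u, rfl⟩ :=
    IsDiscreteValuationRing.eq_unit_mul_pow_irreducible (nonZeroDivisors.ne_zero hb) hϖ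
  refine ⟨m, ?_⟩
  have hx : algebraMap R (KF R K n c) ϖ ^ m * AdjoinRoot.mk _ f =
      (↑u⁻¹ : R) •
        aeval (θF R K n c) (IsLocalization.integerNormalization (nonZeroDivisors R) f) := by
    rw [← aeval_map_algebraMap K, hbf, ← algebraMap_smul K _ f, map_smul, algebraMap_smul, θF,
      AdjoinRoot.aeval_eq, smul_smul, ← mul_assoc, Units.inv_mul, one_mul, Algebra.smul_def,
      map_pow]
  exact hx ▸ Subalgebra.smul_mem _ (aeval_mem_adjoin_singleton R _) _

lemma isMaxOrder_iff_forall_mem_adjoin (hP : (formPoly n c).IsPrimitive) {y : KF R K n c}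
    (hy : θF R K n c * y = 1) : IsMaxOrder R K n c ↔ ∀ x : KF R K n c, IsIntegral R x →
      x ∈ Algebra.adjoin R {θF R K n c} ∧ x ∈ Algebra.adjoin R {y} := by
  rw [IsMaxOrder, le_antisymm_iff, and_iff_right]
  · exact forall₂_congr fun x _ ↦ mem_RFmod_iff hP hy
  · exact fun x hx ↦ isIntegral_of_mem_adjoin_of_mem_adjoin_inv hy ((mem_RFmod_iff hP hy).mp hx).1
      ((mem_RFmod_iff hP hy).mp hx).2

lemma aeval_inv_eq_zero_iff (hP : (formPoly n c).IsPrimitive) (h0 : c 0 ≠ 0) {y : KF R K n c}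
    (hy : θF R K n c * y = 1) {g : R[X]} :
    aeval y g = 0 ↔ reflect n (formPoly n c) ∣ g := by
  have hyP : aeval y (reflect n (formPoly n c)) = 0 := by
    rw [← pow_mul_aeval_eq_aeval_reflect hy (natDegree_formPoly_le n c), aeval_θF_formPoly,
      mul_zero]
  refine ⟨fun hg ↦ ?_, fun ⟨w, hw⟩ ↦ by rw [hw, map_mul, hyP, zero_mul]⟩
  obtain ⟨w, hw⟩ : formPoly n c ∣ reflect g.natDegree g := by
    rw [← aeval_θF_eq_zero_iff (K := K) hP, ← pow_mul_aeval_reflect_eq_aeval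
      (mul_comm y (θF R K n c) ▸ hy) (natDegree_reflect_le.trans (max_le le_rfl le_rfl)),
      reflect_reflect, hg, mul_zero]
  rcases eq_or_ne w 0 with rfl | hw0
  · rw [mul_zero, reflect_eq_zero_iff] at hw
    exact hw ▸ dvd_zero _
  have hn : (formPoly n c).natDegree = n := (natDegree_formPoly_le n c).antisymm <|
    le_natDegree_of_ne_zero (by rwa [coeff_formPoly, if_pos le_rfl, Nat.sub_self])
  have hdeg : (reflect g.natDegree g).natDegree = n + w.natDegree := by
    rw [hw, natDegree_mul hP.ne_zero hw0, hn]
  obtain ⟨m, hm⟩ := Nat.exists_eq_add_of_le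
    (le_of_add_le_left (hdeg ▸ natDegree_reflect_le.trans (max_le le_rfl le_rfl)))
  have hwm : w.natDegree ≤ m := by
    have := natDegree_reflect_le (N := g.natDegree) (p := g)
    omega
  refine ⟨reflect m w, ?_⟩
  rw [← reflect_mul _ _ (natDegree_formPoly_le n c) hwm, ← hm, ← hw, reflect_reflect]

variable {k : Type*} [Field k] {π : R →+* k}

/-- A form with `ϖ² ∤ F(1, 0)` is maximal at the point at infinity, so maximality is Dedekind's
criterion on the affine line. -/
theorem isMaxOrder_iff_isCoprime (hπ : Function.Surjective π) (hϖ : Irreducible ϖ)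
    (h0 : ¬ ϖ ^ 2 ∣ c 0) (hn : c n ≠ 0) (hP : (formPoly n c).map π ≠ 0) {B D G : R[X]}
    (hBDG : formPoly n c = B * D ^ 2 + C ϖ * G) (hB : Squarefree (B.map π)) :
    IsMaxOrder R K n c ↔ IsCoprime (D.map π) (G.map π) := by
  have hprim := isPrimitive_of_map_ne_zero hπ hP
  obtain ⟨y, hy⟩ := exists_θF_mul_eq_one (K := K) hn
  rw [isMaxOrder_iff_forall_mem_adjoin hprim hy]
  constructor
  · refine not_imp_not.mp fun hDG hmax ↦ ?_
    have hD : D.map π ≠ 0 := fun h ↦ hP <| by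
      simp [hBDG, h, map_C_uniformizer hπ hϖ]
    obtain ⟨φ, hφ, hφ1, hφD, hφG⟩ := exists_monic_map_dvd_of_not_isCoprime hπ hD hDG
    obtain ⟨E, U, rfl⟩ := exists_eq_mul_add_C_mul_of_map_dvd hπ hϖ hφD
    obtain ⟨H, V, rfl⟩ := exists_eq_mul_add_C_mul_of_map_dvd hπ hϖ hφG
    obtain ⟨β, hβ, hβθ⟩ := exists_isIntegral_notMem_adjoin (a := B * E ^ 2)
      (b := 2 * B * E * U + H) (e := B * U ^ 2 + V) ((map_eq_zero_iff_dvd hπ hϖ).mpr dvd_rfl)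
      (isUnit_algebraMap_KF hϖ.ne_zero) hφ hφ1 (by rw [hBDG]; ring) hP
      fun r ↦ aeval_θF_eq_zero_iff (K := K) hprim
    exact hβθ (hmax β hβ).1
  · intro hDG x hx
    have hxθ : x ∈ Algebra.adjoin R {θF R K n c} :=
      mem_adjoin_of_isIntegral_of_isCoprime hπ hϖ (isUnit_algebraMap_KF hϖ.ne_zero) (hBDG ▸ hP) hB
        hDG (hBDG ▸ aeval_θF_formPoly) hx (exists_pow_mul_mem_adjoin_θF hϖ x)
    refine ⟨hxθ, ?_⟩
    obtain ⟨g, rfl⟩ := Algebra.adjoin_mem_exists_aeval R _ hxθ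
    refine mem_adjoin_of_isIntegral_of_not_sq_dvd_coeff_zero (P := reflect n (formPoly n c)) hϖ
      (isUnit_algebraMap_KF hϖ.ne_zero) ?_ (IsUnit.of_mul_eq_one_right _ hy)
      ((aeval_inv_eq_zero_iff hprim (fun h ↦ h0 (h ▸ dvd_zero _)) hy).mpr dvd_rfl) hx
      ⟨g.natDegree, ?_⟩
    · rwa [coeff_reflect, revAt_le n.zero_le, coeff_formPoly, if_pos (n.sub_le 0), Nat.sub_zero,
        Nat.sub_self]
    · rw [pow_mul_aeval_eq_aeval_reflect hy le_rfl]
      exact aeval_mem_adjoin_singleton R y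

theorem not_isMaxOrder_of_sq_dvd_of_dvd (hπ : Function.Surjective π) (hϖ : Irreducible ϖ)
    (hn1 : 1 ≤ n) (h0 : ϖ ^ 2 ∣ c 0) (h1 : ϖ ∣ c 1) (h00 : c 0 ≠ 0) (hn : c n ≠ 0)
    (hP : (formPoly n c).map π ≠ 0) : ¬ IsMaxOrder R K n c := by
  have hprim := isPrimitive_of_map_ne_zero hπ hP
  obtain ⟨y, hy⟩ := exists_θF_mul_eq_one (K := K) hn
  obtain ⟨e, he⟩ := h0
  obtain ⟨b, hb⟩ := h1
  set Q := reflect n (formPoly n c) with hQ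
  have hQ0 : Q.coeff 0 = ϖ ^ 2 * e := by
    rw [hQ, coeff_reflect, revAt_le n.zero_le, coeff_formPoly, if_pos (n.sub_le 0), Nat.sub_zero,
      Nat.sub_self, he]
  have hQ1 : Q.divX.coeff 0 = ϖ * b := by
    rw [hQ, coeff_divX, coeff_reflect, revAt_le hn1, coeff_formPoly, if_pos (n.sub_le _),
      Nat.sub_sub_self hn1, hb]
  have hQX : Q = X ^ 2 * Q.divX.divX + C ϖ * (X * C b) + C ϖ ^ 2 * C e := by
    conv_lhs => rw [← X_mul_divX_add Q, ← X_mul_divX_add Q.divX, hQ0, hQ1]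
    simp only [C_mul, C_pow]
    ring
  have hQπ : Q.map π ≠ 0 := by
    rwa [hQ, ← reflect_map, Ne, reflect_eq_zero_iff]
  have hX : (X : R[X]) ≠ 1 := fun h ↦ by simpa using congrArg natDegree h
  rw [isMaxOrder_iff_forall_mem_adjoin hprim hy]
  intro hmax
  obtain ⟨β, hβ, hβy⟩ := exists_isIntegral_notMem_adjoin ((map_eq_zero_iff_dvd hπ hϖ).mpr dvd_rfl)
    (isUnit_algebraMap_KF hϖ.ne_zero) monic_X hX hQX hQπ fun r ↦ aeval_inv_eq_zero_iff hprim h00 hy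
  exact hβy (hmax β hβ).2

end MaximalOrder

/-! ### Reduction of p-adic forms modulo p -/

/-- `F` is a unit constant times the square of a polynomial: the dehomogenized form of even
ramification, for the reduction of a form of even degree. -/
def IsEvenlyRamified {k : Type*} [Field k] (F : k[X]) : Prop :=
  ∃ (κ : kˣ) (h : k[X]), F = C (κ : k) * h ^ 2

lemma IsEvenlyRamified.even_natDegree {k : Type*} [Field k] {F : k[X]} (hF : IsEvenlyRamified F) :
    Even F.natDegree := by
  obtain ⟨κ, h, rfl⟩ := hF
  rw [natDegree_C_mul κ.ne_zero, natDegree_pow]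
  exact even_two_mul _

section ReductionModP

variable {p} {n : ℕ} {c : ℕ → ℤ_[p]}

lemma toZMod_surjective : Function.Surjective (PadicInt.toZMod (p := p)) :=
  ZMod.ringHom_surjective PadicInt.toZMod

lemma toZMod_eq_zero_iff {x : ℤ_[p]} : PadicInt.toZMod x = 0 ↔ (p : ℤ_[p]) ∣ x :=
  map_eq_zero_iff_dvd toZMod_surjective PadicInt.irreducible_p

lemma primP_iff : PrimP p n c ↔ (formPoly n c).map PadicInt.toZMod ≠ 0 := by
  simp only [PrimP, isUnit_iff_map_ne_zero (toZMod_surjective (p := p)), Ne, Polynomial.ext_iff,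
    coeff_map, coeff_formPoly, coeff_zero, not_forall]
  constructor
  · rintro ⟨i, hi, hu⟩
    exact ⟨n - i, by rwa [if_pos (n.sub_le i), Nat.sub_sub_self hi]⟩
  · rintro ⟨m, hm⟩
    refine ⟨n - m, n.sub_le m, fun h ↦ hm ?_⟩
    split_ifs
    exacts [h, map_zero _]

lemma homogenize_map_formPoly :
    homogenize ((formPoly n c).map PadicInt.toZMod) n = redForm p n c := by
  rw [map_formPoly, formPoly, homogenize_finsetSum, redForm]
  refine Finset.sum_congr rfl fun i hi ↦ ?_
  have hi := Finset.mem_range.mp hi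
  rw [homogenize_C_mul, homogenize_X_pow (n.sub_le i), Nat.sub_sub_self (by omega), ← mul_assoc]
  rfl

lemma evenRamP_iff (hn : Even n) :
    EvenRamP p n c ↔ IsEvenlyRamified ((formPoly n c).map PadicInt.toZMod) := by
  constructor
  · rintro ⟨κ, H, hH⟩
    refine ⟨κ, MvPolynomial.aeval ![X, 1] H, ?_⟩
    have h := congrArg (MvPolynomial.aeval ![(X : (ZMod p)[X]), 1]) hH
    rw [map_formPoly, formPoly]
    simpa [redForm] using h
  · rintro ⟨κ, h, hh⟩
    obtain ⟨m, rfl⟩ := hn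
    have hdeg : h.natDegree ≤ m := by
      have h1 := (natDegree_map_le (f := PadicInt.toZMod)).trans (natDegree_formPoly_le (m + m) c)
      rw [hh, natDegree_C_mul κ.ne_zero, natDegree_pow] at h1
      omega
    refine ⟨κ, homogenize h m, ?_⟩
    rw [← homogenize_map_formPoly, hh, homogenize_C_mul, sq, homogenize_mul _ _ hdeg hdeg, sq]

lemma p_dvd_coeff_one_of_isEvenlyRamified (hn : Even n)
    (hP : (formPoly n c).map PadicInt.toZMod ≠ 0)
    (hE : IsEvenlyRamified ((formPoly n c).map PadicInt.toZMod)) (h0 : (p : ℤ_[p]) ∣ c 0) :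
    (p : ℤ_[p]) ∣ c 1 := by
  set F := (formPoly n c).map PadicInt.toZMod with hF
  have hcoeff (i : ℕ) (hi : i ≤ n) : F.coeff (n - i) = PadicInt.toZMod (c i) := by
    rw [hF, coeff_map, coeff_formPoly, if_pos (n.sub_le i), Nat.sub_sub_self hi]
  have hle : F.natDegree ≤ n := natDegree_map_le.trans (natDegree_formPoly_le n c)
  have hne : F.natDegree ≠ n := fun h ↦ hP <| leadingCoeff_eq_zero.mp <| by
    rw [leadingCoeff, h, ← Nat.sub_zero n, hcoeff 0 n.zero_le, toZMod_eq_zero_iff.mpr h0]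
  obtain ⟨m, rfl⟩ := hn
  obtain ⟨d, hd⟩ := hE.even_natDegree
  rw [← toZMod_eq_zero_iff, ← hcoeff 1 (by omega), coeff_eq_zero_of_natDegree_lt (by omega)]

lemma not_isMaxOrder_of_isEvenlyRamified (hn0 : n ≠ 0) (hn : Even n) (h00 : c 0 ≠ 0)
    (hcn : c n ≠ 0) (h0 : (p : ℤ_[p]) ^ 2 ∣ c 0) (hP : (formPoly n c).map PadicInt.toZMod ≠ 0)
    (hE : IsEvenlyRamified ((formPoly n c).map PadicInt.toZMod)) :
    ¬ IsMaxOrder ℤ_[p] ℚ_[p] n c :=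
  not_isMaxOrder_of_sq_dvd_of_dvd toZMod_surjective PadicInt.irreducible_p (by omega) h0
    (p_dvd_coeff_one_of_isEvenlyRamified hn hP hE (dvd_of_mul_left_dvd (sq (p : ℤ_[p]) ▸ h0)))
    h00 hcn hP

end ReductionModP

/-! ### Haar measure on coefficient space -/

section TailPoly

variable {S T : Type*} [CommRing S] [CommRing T] {n : ℕ}

/-- The part `∑ vᵢ X^(n-1-i)` of `F(x, 1)` below `f₀ X^n`, for a form with leading coefficient `f₀`
and remaining coefficients `v`, listed in descending order. -/
def tailPoly (n : ℕ) : (Fin n → S) →ₗ[S] S[X] :=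
  ofFn n ∘ₗ LinearMap.funLeft S S Fin.rev

lemma coeff_tailPoly (v : Fin n → S) (m : ℕ) :
    (tailPoly n v).coeff m = if h : m < n then v (Fin.rev ⟨m, h⟩) else 0 := by
  rw [tailPoly, LinearMap.comp_apply]
  split_ifs with h
  · rw [ofFn_coeff_eq_val_of_lt _ h, LinearMap.funLeft_apply]
  · exact ofFn_coeff_eq_zero_of_ge _ (not_lt.mp h)

lemma degree_tailPoly_lt (v : Fin n → S) : (tailPoly n v).degree < n :=
  ofFn_degree_lt _

lemma tailPoly_injective : Function.Injective (tailPoly n : (Fin n → S) → S[X]) :=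
  (injective_ofFn n).comp (LinearMap.funLeft_injective_of_surjective S S _ Fin.rev_surjective)

lemma exists_tailPoly_eq {f : S[X]} (hf : f.degree < n) : ∃ v, tailPoly n v = f := by
  refine ⟨fun i ↦ f.coeff i.rev, Polynomial.ext fun m ↦ ?_⟩
  rw [coeff_tailPoly]
  split_ifs with h
  · rw [Fin.rev_rev]
  · exact (coeff_eq_zero_of_degree_lt (hf.trans_le (by exact_mod_cast not_lt.mp h))).symm

lemma map_tailPoly (f : S →+* T) (v : Fin n → S) : (tailPoly n v).map f = tailPoly n (f ∘ v) := by
  ext m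
  rw [coeff_map, coeff_tailPoly, coeff_tailPoly]
  split_ifs <;> simp

lemma tailPoly_cons (a : S) (v : Fin n → S) :
    tailPoly (n + 1) (Fin.cons a v) = C a * X ^ n + tailPoly n v := by
  ext m
  rw [coeff_add, coeff_C_mul_X_pow, coeff_tailPoly, coeff_tailPoly]
  rcases lt_trichotomy m n with h | rfl | h
  · have hrev : Fin.rev ⟨m, h.trans n.lt_succ_self⟩ = (Fin.rev ⟨m, h⟩).succ :=
      Fin.ext (show n + 1 - (m + 1) = n - (m + 1) + 1 by omega)
    rw [dif_pos (h.trans n.lt_succ_self), dif_pos h, if_neg h.ne, zero_add, hrev, Fin.cons_succ]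
  · have hrev : Fin.rev ⟨m, m.lt_succ_self⟩ = 0 :=
      Fin.ext (show m + 1 - (m + 1) = 0 by omega)
    rw [dif_pos m.lt_succ_self, dif_neg (lt_irrefl m), if_pos rfl, add_zero, hrev, Fin.cons_zero]
  · rw [dif_neg (by omega), dif_neg (by omega), if_neg h.ne', add_zero]

end TailPoly

section ConsF0

variable {p} {n : ℕ} {f₀ : ℤ_[p]}

lemma consF0_zero (v : Fin n → ℤ_[p]) : consF0 p n f₀ v 0 = f₀ :=
  if_pos rfl

lemma continuous_consF0 (j : ℕ) : Continuous fun v ↦ consF0 p n f₀ v j := by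
  unfold consF0
  split_ifs
  exacts [continuous_const, continuous_apply _, continuous_const]

lemma formPoly_consF0 (v : Fin n → ℤ_[p]) :
    formPoly n (consF0 p n f₀ v) = C f₀ * X ^ n + tailPoly n v := by
  ext m
  rw [coeff_formPoly, coeff_add, coeff_C_mul_X_pow, coeff_tailPoly, consF0]
  rcases lt_trichotomy m n with h | rfl | h
  · rw [if_pos h.le, if_neg (by omega), dif_pos (by omega), if_neg h.ne, dif_pos h, zero_add]
    exact congrArg v (Fin.ext (show n - m - 1 = n - (m + 1) by omega))
  · simp
  · rw [if_neg (by omega), if_neg (by omega), dif_neg (by omega), add_zero]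

lemma map_formPoly_consF0 (v : Fin n → ℤ_[p]) :
    (formPoly n (consF0 p n f₀ v)).map PadicInt.toZMod =
      C (PadicInt.toZMod f₀) * X ^ n + tailPoly n (PadicInt.toZMod ∘ v) := by
  rw [formPoly_consF0, Polynomial.map_add, map_tailPoly, Polynomial.map_mul, map_C,
    Polynomial.map_pow, map_X]

end ConsF0

section NullSets

lemma measure_eq_zero_of_finite_setOf_nsmul_add_mem {G : Type*} [AddGroup G] [MeasurableSpace G]
    [MeasurableAdd G] {μ : Measure G} [IsFiniteMeasure μ] [μ.IsAddLeftInvariant] {E : Set G}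
    (hE : MeasurableSet E) (e : G) (hfin : ∀ v, {k : ℕ | k • e + v ∈ E}.Finite) : μ E = 0 := by
  rw [measure_eq_zero_iff_ae_notMem]
  filter_upwards [(measurePreserving_add_left μ e).conservative.ae_mem_imp_frequently_image_mem
    hE.nullMeasurableSet] with v hv hvE
  refine Nat.frequently_atTop_iff_infinite.mp (hv hvE) ?_
  simpa only [add_left_iterate] using hfin v

lemma finite_setOf_not_separable_add_C {K : Type*} [Field K] {F : K[X]}
    (hF : derivative F ≠ 0) : {a | ¬ (F + C a).Separable}.Finite := by
  refine ((((derivative F).aroots (AlgebraicClosure K)).toFinset.image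
    fun x ↦ -aeval x F).finite_toSet.preimage (algebraMap K _).injective.injOn).subset fun a ha ↦ ?_
  rw [Set.mem_ofPred_eq, Separable,
    isCoprime_iff_aeval_ne_zero_of_isAlgClosed _ (AlgebraicClosure K)] at ha
  push Not at ha
  obtain ⟨x, hx, hx'⟩ := ha
  rw [derivative_add, derivative_C, add_zero] at hx'
  rw [map_add, aeval_C] at hx
  rw [Set.mem_preimage, Finset.mem_coe, Finset.mem_image]
  exact ⟨x, Multiset.mem_toFinset.mpr (mem_aroots.mpr ⟨hF, hx'⟩), neg_eq_of_add_eq_zero_right hx⟩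

lemma continuous_resultant {A V : Type*} [CommRing A] [TopologicalSpace A] [IsTopologicalRing A]
    [TopologicalSpace V] {P Q : V → A[X]} (m l : ℕ) (hP : ∀ i, Continuous fun v ↦ (P v).coeff i)
    (hQ : ∀ i, Continuous fun v ↦ (Q v).coeff i) :
    Continuous fun v ↦ resultant (P v) (Q v) m l := by
  refine Continuous.matrix_det (continuous_matrix fun i j ↦ ?_)
  simp only [sylvester, Matrix.of_apply]
  refine Fin.addCases (fun j ↦ ?_) (fun j ↦ ?_) j
  · simp only [Fin.addCases_left]
    split_ifs
    exacts [hQ _, continuous_const]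
  · simp only [Fin.addCases_right]
    split_ifs
    exacts [hP _, continuous_const]

variable {p} {n : ℕ} {f₀ : ℤ_[p]}

instance isAddHaarMeasure_haarP : (haarP p n).IsAddHaarMeasure :=
  inferInstanceAs (Measure.addHaarMeasure _).IsAddHaarMeasure

instance isProbabilityMeasure_haarP : IsProbabilityMeasure (haarP p n) :=
  ⟨Measure.addHaarMeasure_self⟩

lemma ae_not_of_finite_setOf_add_C (hn : n ≠ 0) {Q : ℤ_[p][X] → Prop}
    (hmeas : MeasurableSet {v | Q (formPoly n (consF0 p n f₀ v))})
    (hfin : ∀ v, {a | Q (formPoly n (consF0 p n f₀ v) + C a)}.Finite) :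
    ∀ᵐ v ∂haarP p n, ¬ Q (formPoly n (consF0 p n f₀ v)) := by
  have h1 : (1 : ℤ_[p][X]).degree < n := by
    rw [degree_one]
    exact_mod_cast hn.bot_lt
  obtain ⟨e, he⟩ := exists_tailPoly_eq h1
  suffices h : haarP p n {v | Q (formPoly n (consF0 p n f₀ v))} = 0 from
    measure_eq_zero_iff_ae_notMem.mp h
  refine measure_eq_zero_of_finite_setOf_nsmul_add_mem hmeas e fun v ↦ ?_
  refine ((hfin v).preimage Nat.cast_injective.injOn).subset fun k hk ↦ ?_
  rw [Set.mem_ofPred_eq, Set.mem_ofPred_eq, formPoly_consF0, map_add, map_nsmul, he] at hk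
  rw [Set.mem_preimage, Set.mem_ofPred_eq, formPoly_consF0]
  convert hk using 1
  rw [nsmul_one, map_natCast]
  ring

lemma natDegree_binPoly {c : ℕ → ℤ_[p]} (h0 : c 0 ≠ 0) :
    (binPoly ℤ_[p] ℚ_[p] n c).natDegree = n := by
  rw [← map_formPoly_eq_binPoly, natDegree_map_eq_of_injective (IsFractionRing.injective _ _)]
  refine (natDegree_formPoly_le n c).antisymm (le_natDegree_of_ne_zero ?_)
  rwa [coeff_formPoly, if_pos le_rfl, Nat.sub_self]

lemma sepDegP_iff {c : ℕ → ℤ_[p]} (h0 : c 0 ≠ 0) :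
    SepDegP p n c ↔ ((formPoly n c).map (algebraMap ℤ_[p] ℚ_[p])).Separable := by
  rw [SepDegP, and_iff_left (natDegree_binPoly h0), map_formPoly_eq_binPoly]

lemma not_sepDegP_iff_resultant_eq_zero {c : ℕ → ℤ_[p]} (h0 : c 0 ≠ 0) :
    ¬ SepDegP p n c ↔ resultant (formPoly n c) (derivative (formPoly n c)) n (n - 1) = 0 := by
  have hd := natDegree_binPoly (n := n) h0
  rw [← map_formPoly_eq_binPoly] at hd
  have hd' := natDegree_derivative ((formPoly n c).map (algebraMap ℤ_[p] ℚ_[p]))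
  have hne : (formPoly n c).map (algebraMap ℤ_[p] ℚ_[p]) ≠ 0 :=
    (Polynomial.map_ne_zero_iff (IsFractionRing.injective _ _)).mpr fun h ↦ h0 <| by
      simpa [coeff_formPoly] using congrArg (coeff · n) h
  have hres := resultant_eq_zero_iff (f := (formPoly n c).map (algebraMap ℤ_[p] ℚ_[p]))
    (g := derivative ((formPoly n c).map (algebraMap ℤ_[p] ℚ_[p])))
  rw [hd', hd, derivative_map, resultant_map_map,
    map_eq_zero_iff _ (IsFractionRing.injective ℤ_[p] ℚ_[p]), and_iff_right (Or.inl hne)] at hres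
  rw [sepDegP_iff h0, Separable, derivative_map, hres]

lemma measurableSet_not_sepDegP (hf₀ : f₀ ≠ 0) :
    MeasurableSet {v | ¬ SepDegP p n (consF0 p n f₀ v)} := by
  have hcont (i : ℕ) : Continuous fun v ↦ (formPoly n (consF0 p n f₀ v)).coeff i := by
    simp only [coeff_formPoly]
    split_ifs
    exacts [continuous_consF0 _, continuous_const]
  have hcont' (i : ℕ) : Continuous fun v ↦ (derivative (formPoly n (consF0 p n f₀ v))).coeff i := by
    simp only [coeff_derivative]
    exact (hcont _).mul continuous_const
  simp only [not_sepDegP_iff_resultant_eq_zero (consF0_zero (f₀ := f₀) _ ▸ hf₀)]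
  exact (isClosed_singleton.preimage (continuous_resultant n (n - 1) hcont hcont')).measurableSet

theorem ae_sepDegP (hn : n ≠ 0) (hf₀ : f₀ ≠ 0) :
    ∀ᵐ v ∂haarP p n, SepDegP p n (consF0 p n f₀ v) := by
  have hc0 (v) : consF0 p n f₀ v 0 ≠ 0 := by rwa [consF0_zero]
  have hmeas := measurableSet_not_sepDegP (n := n) hf₀
  simp only [sepDegP_iff (hc0 _)] at hmeas ⊢
  refine (ae_not_of_finite_setOf_add_C hn
    (Q := fun F ↦ ¬ (F.map (algebraMap ℤ_[p] ℚ_[p])).Separable) hmeas fun v ↦ ?_).mono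
      fun v hv ↦ not_not.mp hv
  have hd : derivative ((formPoly n (consF0 p n f₀ v)).map (algebraMap ℤ_[p] ℚ_[p])) ≠ 0 := by
    rw [map_formPoly_eq_binPoly, Ne, derivative_eq_zero, natDegree_binPoly (hc0 v)]
    exact hn
  refine ((finite_setOf_not_separable_add_C hd).preimage
    (IsFractionRing.injective ℤ_[p] ℚ_[p]).injOn).subset fun a ha ↦ ?_
  rwa [Set.mem_ofPred_eq, Polynomial.map_add, map_C] at ha

theorem ae_consF0_last_ne_zero (hn : n ≠ 0) : ∀ᵐ v ∂haarP p n, consF0 p n f₀ v n ≠ 0 := by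
  have hcoeff (v) : (formPoly n (consF0 p n f₀ v)).coeff 0 = consF0 p n f₀ v n := by
    rw [coeff_formPoly, if_pos n.zero_le, Nat.sub_zero]
  simp only [← hcoeff]
  refine ae_not_of_finite_setOf_add_C hn (Q := fun F ↦ F.coeff 0 = 0) ?_ fun v ↦ ?_
  · simp only [hcoeff]
    exact (isClosed_singleton.preimage (continuous_consF0 n)).measurableSet
  · refine (Set.finite_singleton (-(formPoly n (consF0 p n f₀ v)).coeff 0)).subset fun a ha ↦ ?_
    rw [Set.mem_ofPred_eq, coeff_add, coeff_C_zero] at ha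
    exact eq_neg_of_add_eq_zero_right ha

end NullSets

section DigitCount

lemma measureReal_preimage_of_surjective {G H : Type*} [AddGroup G] [MeasurableSpace G]
    [MeasurableAdd G] {μ : Measure G} [IsFiniteMeasure μ] [μ.IsAddLeftInvariant] [AddGroup H]
    [Finite H] {f : G →+ H} (hf : Function.Surjective f)
    (hmeas : ∀ h, MeasurableSet (f ⁻¹' {h})) (T : Set H) :
    μ.real (f ⁻¹' T) = T.ncard / Nat.card H * μ.real Set.univ := by
  have := Fintype.ofFinite H
  have hfiber (h : H) : μ.real (f ⁻¹' {h}) = μ.real (f ⁻¹' {0}) := by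
    obtain ⟨g, rfl⟩ := hf h
    have hg : f ⁻¹' {0} = (g + ·) ⁻¹' (f ⁻¹' {f g}) := by
      ext x
      simp
    rw [hg, measureReal_def, measureReal_def, measure_preimage_add]
  have hcount (T : Set H) : μ.real (f ⁻¹' T) = T.ncard * μ.real (f ⁻¹' {0}) := by
    have hT : f ⁻¹' T = ⋃ h ∈ T.toFinset, f ⁻¹' {h} := by
      ext x
      simp
    rw [hT, measureReal_biUnion_finset
      (fun h _ h' _ hne ↦ (Set.disjoint_singleton.mpr hne).preimage f) fun h _ ↦ hmeas h,
      Finset.sum_congr rfl fun h _ ↦ hfiber h, Finset.sum_const, nsmul_eq_mul,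
      Set.ncard_eq_toFinset_card']
  have huniv := hcount Set.univ
  rw [Set.preimage_univ, Set.ncard_univ] at huniv
  rw [hcount, huniv, ← mul_assoc, div_mul_cancel₀ _ (Nat.cast_ne_zero.mpr Nat.card_pos.ne')]

lemma ncard_preimage_of_surjective {G H : Type*} [AddGroup G] [Finite G] [AddGroup H] [Finite H]
    {f : G →+ H} (hf : Function.Surjective f) (T : Set H) :
    ((f ⁻¹' T).ncard : ℝ) = T.ncard / Nat.card H * Nat.card G := by
  let _ : MeasurableSpace G := ⊤
  have h := measureReal_preimage_of_surjective (μ := Measure.count) hf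
    (fun _ ↦ MeasurableSpace.measurableSet_top) T
  rwa [Measure.count_real_univ, measureReal_def,
    Measure.count_apply MeasurableSpace.measurableSet_top, ← (Set.toFinite _).cast_ncard_eq,
    ENat.toENNReal_coe, ENNReal.toReal_natCast] at h

variable {p} {n : ℕ}

/-- Coordinatewise reduction modulo `p²`. -/
def reduceSq (p : ℕ) [Fact p.Prime] (n : ℕ) : (Fin n → ℤ_[p]) →+ (Fin n → ZMod (p ^ 2)) :=
  (PadicInt.toZModPow 2).toAddMonoidHom.compLeft (Fin n)

lemma reduceSq_eq_iff {v w : Fin n → ℤ_[p]} :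
    reduceSq p n v = reduceSq p n w ↔ ∀ i, (p : ℤ_[p]) ^ 2 ∣ v i - w i := by
  rw [funext_iff]
  refine forall_congr' fun i ↦ ?_
  rw [← Ideal.mem_span_singleton, ← PadicInt.ker_toZModPow, RingHom.sub_mem_ker_iff]
  rfl

lemma reduceSq_surjective : Function.Surjective (reduceSq p n) :=
  (ZMod.ringHom_surjective (PadicInt.toZModPow 2)).comp_left

lemma measurableSet_reduceSq_fiber (h : Fin n → ZMod (p ^ 2)) :
    MeasurableSet (reduceSq p n ⁻¹' {h}) := by
  obtain ⟨w, rfl⟩ := reduceSq_surjective h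
  have hball : reduceSq p n ⁻¹' {reduceSq p n w} =
      ⋂ i, {v | ‖v i - w i‖ ≤ (p : ℝ) ^ (-(2 : ℕ) : ℤ)} := by
    ext v
    simp only [Set.mem_preimage, Set.mem_singleton_iff, reduceSq_eq_iff, Set.mem_iInter,
      Set.mem_ofPred_eq, PadicInt.norm_le_pow_iff_mem_span_pow, Ideal.mem_span_singleton]
  rw [hball]
  exact MeasurableSet.iInter fun i ↦ (isClosed_le
    ((continuous_apply i).sub continuous_const).norm continuous_const).measurableSet

variable {L : (Fin n → ZMod p) → Fin n → ℤ_[p]}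

lemma exists_eq_add_p_smul (hL : ∀ a, PadicInt.toZMod ∘ L a = a) (v : Fin n → ℤ_[p]) :
    ∃ w, v = L (PadicInt.toZMod ∘ v) + (p : ℤ_[p]) • w := by
  have h (i) : ∃ y, v i - L (PadicInt.toZMod ∘ v) i = p * y := by
    rw [← dvd_def, ← toZMod_eq_zero_iff, map_sub, sub_eq_zero]
    exact (congrFun (hL (PadicInt.toZMod ∘ v)) i).symm
  choose w hw using h
  exact ⟨w, funext fun i ↦ by simp [← hw]⟩

/-- The class modulo `p²` with lowest `p`-adic digits `a` and second digits `b`, both relative to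
the system of representatives `L`. -/
def twoDigit (L : (Fin n → ZMod p) → Fin n → ℤ_[p]) (ab : (Fin n → ZMod p) × (Fin n → ZMod p)) :
    Fin n → ZMod (p ^ 2) :=
  reduceSq p n (L ab.1 + (p : ℤ_[p]) • L ab.2)

lemma reduceSq_eq_twoDigit_iff (hL : ∀ a, PadicInt.toZMod ∘ L a = a) {a a' b : Fin n → ZMod p}
    {w : Fin n → ℤ_[p]} :
    reduceSq p n (L a + (p : ℤ_[p]) • w) = twoDigit L (a', b) ↔
      a = a' ∧ PadicInt.toZMod ∘ w = b := by
  have hLi (a i) : PadicInt.toZMod (L a i) = a i := congrFun (hL a) i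
  have hp0 : (p : ℤ_[p]) ≠ 0 := PadicInt.irreducible_p.ne_zero
  rw [twoDigit, reduceSq_eq_iff]
  constructor
  · intro h
    obtain rfl : a = a' := funext fun i ↦ by
      have h1 := toZMod_eq_zero_iff.mpr (dvd_of_mul_left_dvd (sq (p : ℤ_[p]) ▸ h i))
      simpa [hLi, sub_eq_zero] using h1
    refine ⟨rfl, funext fun i ↦ ?_⟩
    have h2 := h i
    simp only [Pi.add_apply, Pi.smul_apply, smul_eq_mul, add_sub_add_left_eq_sub, ← mul_sub, sq,
      mul_dvd_mul_iff_left hp0, ← toZMod_eq_zero_iff, map_sub, hLi, sub_eq_zero] at h2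
    exact h2
  · rintro ⟨rfl, rfl⟩ i
    simp only [Pi.add_apply, Pi.smul_apply, smul_eq_mul, add_sub_add_left_eq_sub, ← mul_sub, sq,
      mul_dvd_mul_iff_left hp0, ← toZMod_eq_zero_iff, map_sub, hLi, sub_eq_zero]
    rfl

lemma twoDigit_injective (hL : ∀ a, PadicInt.toZMod ∘ L a = a) :
    Function.Injective (twoDigit L) := by
  rintro ⟨a, b⟩ ⟨a', b'⟩ h
  obtain ⟨h1, h2⟩ := (reduceSq_eq_twoDigit_iff hL).mp h
  exact Prod.ext h1 ((hL b).symm.trans h2)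

theorem haarP_eq_sum_of_digits (hL : ∀ a, PadicInt.toZMod ∘ L a = a) {S : Set (Fin n → ℤ_[p])}
    {T : (Fin n → ZMod p) → Set (Fin n → ZMod p)}
    (hST : ∀ᵐ v ∂haarP p n, ∀ a w, v = L a + (p : ℤ_[p]) • w →
      (v ∈ S ↔ PadicInt.toZMod ∘ w ∈ T a)) :
    (haarP p n S).toReal = (∑ a, ((T a).ncard / p ^ n : ℝ)) / p ^ n := by
  have hS : S =ᵐ[haarP p n] reduceSq p n ⁻¹' (twoDigit L '' {ab | ab.2 ∈ T ab.1}) := by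
    filter_upwards [hST] with v hv
    obtain ⟨w, hw⟩ := exists_eq_add_p_smul hL v
    have hdigit : reduceSq p n v = twoDigit L (PadicInt.toZMod ∘ v, PadicInt.toZMod ∘ w) := by
      nth_rewrite 1 [hw]
      exact (reduceSq_eq_twoDigit_iff hL).mpr ⟨rfl, rfl⟩
    refine propext ((hv _ w hw).trans ?_)
    change _ ↔ reduceSq p n v ∈ _
    rw [hdigit, (twoDigit_injective hL).mem_set_image]
    rfl
  have hcard : {ab : (Fin n → ZMod p) × (Fin n → ZMod p) | ab.2 ∈ T ab.1}.ncard =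
      ∑ a, (T a).ncard := by
    rw [← Nat.card_coe_set_eq, ← Finset.sum_congr rfl fun a _ ↦ Nat.card_coe_set_eq (T a),
      ← Nat.card_sigma]
    exact Nat.card_congr ⟨fun x ↦ ⟨x.1.1, x.1.2, x.2⟩, fun x ↦ ⟨(x.1, x.2.1), x.2.2⟩,
      fun _ ↦ rfl, fun _ ↦ rfl⟩
  rw [measure_congr hS]
  refine (measureReal_preimage_of_surjective reduceSq_surjective
    measurableSet_reduceSq_fiber _).trans ?_
  rw [probReal_univ, mul_one, Set.ncard_image_of_injective _ (twoDigit_injective hL), hcard,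
    Nat.card_fun, Nat.card_zmod, Nat.card_fin, ← Finset.sum_div, div_div, ← pow_mul, two_mul,
    pow_add]
  push_cast
  rfl

end DigitCount

/-! ### Square parts -/

section SquarePart

lemma exists_squarefree_mul_sq {M : Type*} [CommMonoidWithZero M] [IsCancelMulZero M]
    [DecompositionMonoid M] [WfDvdMonoid M] {a : M} (ha : a ≠ 0) :
    ∃ b d, Squarefree b ∧ d ≠ 0 ∧ a = b * d ^ 2 := by
  have : Nontrivial M := ⟨a, 0, ha⟩
  induction a using WfDvdMonoid.induction_on_irreducible with
  | zero => exact absurd rfl ha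
  | unit u hu => exact ⟨u, 1, hu.squarefree, one_ne_zero, by rw [one_pow, mul_one]⟩
  | mul a i ha0 hi ih =>
    obtain ⟨b, d, hb, hd, rfl⟩ := ih ha0
    by_cases hib : i ∣ b
    · obtain ⟨b, rfl⟩ := hib
      exact ⟨b, i * d, hb.of_mul_right, mul_ne_zero hi.ne_zero hd, by
        rw [mul_pow, sq i]; ac_rfl⟩
    · exact ⟨i * b, d,
        squarefree_mul_iff.mpr ⟨hi.isRelPrime_iff_not_dvd.mpr hib, hi.squarefree, hb⟩,
        hd, (mul_assoc ..).symm⟩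

lemma dvd_of_sq_dvd_squarefree_mul_sq {M : Type*} [CommMonoidWithZero M] [GCDMonoid M] {a b d : M}
    (hb : Squarefree b) (ha : a ≠ 0) (h : a ^ 2 ∣ b * d ^ 2) : a ∣ d := by
  obtain ⟨x, y, hx, hy, hxy⟩ := extract_gcd a d
  have hg : gcd a d ≠ 0 := fun h0 ↦ ha (by rw [hx, h0, zero_mul])
  generalize gcd a d = g at hx hy hg
  subst hx hy
  have hdvd : x ^ 2 ∣ b * y ^ 2 := by
    rw [mul_pow, mul_pow, mul_left_comm] at h
    exact (mul_dvd_mul_iff_left (pow_ne_zero 2 hg)).mp h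
  have hrel : IsRelPrime (x ^ 2) (y ^ 2) := (gcd_isUnit_iff_isRelPrime.mp hxy).pow
  have hunit : IsUnit x := hb x (by simpa only [sq] using hrel.dvd_of_dvd_mul_right hdvd)
  exact mul_dvd_mul_left g hunit.dvd

variable {k : Type*} [Field k]

lemma exists_squarefree_mul_monic_sq {F : k[X]} (hF : F ≠ 0) :
    ∃ B D, Squarefree B ∧ Monic D ∧ F = B * D ^ 2 := by
  obtain ⟨B, D, hB, hD, rfl⟩ := exists_squarefree_mul_sq hF
  have hl := leadingCoeff_ne_zero.mpr hD
  have hu : IsUnit (C D.leadingCoeff ^ 2) := (isUnit_C.mpr hl.isUnit).pow 2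
  refine ⟨C D.leadingCoeff ^ 2 * B, D * C D.leadingCoeff⁻¹,
    fun x hx ↦ hB x (hu.dvd_mul_left.mp hx), monic_mul_leadingCoeff_inv hD, ?_⟩
  have h : C D.leadingCoeff * C D.leadingCoeff⁻¹ = 1 := by rw [← C_mul, mul_inv_cancel₀ hl, C_1]
  calc B * D ^ 2 = B * D ^ 2 * (C D.leadingCoeff * C D.leadingCoeff⁻¹) ^ 2 := by rw [h]; ring
    _ = _ := by ring

/-- The monic polynomial `D` in the decomposition `F = B * D²` of a nonzero polynomial with `B`
squarefree. -/
def squarePart (F : k[X]) : k[X] :=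
  if hF : F ≠ 0 then (exists_squarefree_mul_monic_sq hF).choose_spec.choose else 1

lemma exists_eq_mul_squarePart_sq {F : k[X]} (hF : F ≠ 0) :
    ∃ B, Squarefree B ∧ F = B * squarePart F ^ 2 := by
  rw [squarePart, dif_pos hF]
  obtain ⟨hB, -, h⟩ := (exists_squarefree_mul_monic_sq hF).choose_spec.choose_spec
  exact ⟨_, hB, h⟩

lemma monic_squarePart (F : k[X]) : (squarePart F).Monic := by
  rw [squarePart]
  split_ifs with hF
  · exact (exists_squarefree_mul_monic_sq hF).choose_spec.choose_spec.2.1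
  · exact monic_one

lemma natDegree_squarePart_le {F : k[X]} (hF : F ≠ 0) :
    (squarePart F).natDegree ≤ F.natDegree := by
  obtain ⟨B, -, hB⟩ := exists_eq_mul_squarePart_sq hF
  exact natDegree_le_of_dvd ((dvd_pow_self _ two_ne_zero).trans (Dvd.intro_left B hB.symm)) hF

lemma exists_monic_eq_mul_squarePart_sq {F : k[X]} (hF : F.Monic) :
    ∃ B, Squarefree B ∧ B.Monic ∧ F.natDegree = B.natDegree + 2 * (squarePart F).natDegree ∧
      F = B * squarePart F ^ 2 := by
  obtain ⟨B, hB, h⟩ := exists_eq_mul_squarePart_sq hF.ne_zero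
  have hD := (monic_squarePart F).pow 2
  have hBm : B.Monic := hD.of_mul_monic_right (h ▸ hF)
  refine ⟨B, hB, hBm, ?_, h⟩
  nth_rewrite 1 [h]
  rw [hBm.natDegree_mul hD, (monic_squarePart F).natDegree_pow]

lemma squarePart_mul_sq {B D : k[X]} (hB : Squarefree B) (hD : D.Monic) :
    squarePart (B * D ^ 2) = D := by
  obtain ⟨B', hB', h⟩ :=
    exists_eq_mul_squarePart_sq (mul_ne_zero hB.ne_zero (pow_ne_zero 2 hD.ne_zero))
  have hS := monic_squarePart (B * D ^ 2)
  exact eq_of_monic_of_associated hS hD <| associated_of_dvd_dvd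
    (dvd_of_sq_dvd_squarefree_mul_sq hB hS.ne_zero (Dvd.intro_left _ h.symm))
    (dvd_of_sq_dvd_squarefree_mul_sq hB' hD.ne_zero (Dvd.intro_left _ h))

lemma squarePart_sq {D : k[X]} (hD : D.Monic) : squarePart (D ^ 2) = D := by
  simpa only [one_mul] using squarePart_mul_sq squarefree_one hD

lemma squarePart_C_mul {u : k} (hu : u ≠ 0) (F : k[X]) : squarePart (C u * F) = squarePart F := by
  rcases eq_or_ne F 0 with rfl | hF
  · rw [mul_zero]
  obtain ⟨B, hB, h⟩ := exists_eq_mul_squarePart_sq hF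
  have huB : Squarefree (C u * B) :=
    fun x hx ↦ hB x ((isUnit_C.mpr hu.isUnit).dvd_mul_left.mp hx)
  nth_rewrite 1 [h]
  rw [← mul_assoc, squarePart_mul_sq huB (monic_squarePart F)]

lemma IsEvenlyRamified.const_mul {u : k} (hu : u ≠ 0) {F : k[X]} (hF : IsEvenlyRamified F) :
    IsEvenlyRamified (C u * F) := by
  obtain ⟨κ, h, rfl⟩ := hF
  exact ⟨Units.mk0 u hu * κ, h, by rw [Units.val_mul, Units.val_mk0, C_mul, mul_assoc]⟩

lemma isEvenlyRamified_C_mul_iff {u : k} (hu : u ≠ 0) {F : k[X]} :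
    IsEvenlyRamified (C u * F) ↔ IsEvenlyRamified F := by
  refine ⟨fun h ↦ ?_, fun h ↦ h.const_mul hu⟩
  simpa only [← mul_assoc, ← C_mul, inv_mul_cancel₀ hu, C_1, one_mul] using
    h.const_mul (inv_ne_zero hu)

lemma IsEvenlyRamified.eq_squarePart_sq {F : k[X]} (hF : F.Monic) (hE : IsEvenlyRamified F) :
    F = squarePart F ^ 2 := by
  obtain ⟨κ, h, rfl⟩ := hE
  have hlead : (κ : k) * h.leadingCoeff ^ 2 = 1 := by
    simpa only [leadingCoeff_mul, leadingCoeff_C, leadingCoeff_pow] using hF.leadingCoeff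
  have hl : h.leadingCoeff ≠ 0 := by
    intro h0
    simp [h0] at hlead
  have hD := monic_mul_leadingCoeff_inv (leadingCoeff_ne_zero.mp hl)
  have hsq : C (κ : k) * h ^ 2 = (h * C h.leadingCoeff⁻¹) ^ 2 := by
    rw [mul_pow, ← C_pow, inv_pow, ← eq_inv_of_mul_eq_one_left hlead, mul_comm]
  rw [hsq, squarePart_sq hD]

lemma IsEvenlyRamified.sq (D : k[X]) : IsEvenlyRamified (D ^ 2) :=
  ⟨1, D, by rw [Units.val_one, C_1, one_mul]⟩

end SquarePart

section Coprime

lemma isCoprime_iff_isUnit_mk {R : Type*} [CommRing R] {D r : R[X]} :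
    IsCoprime D r ↔ IsUnit (AdjoinRoot.mk D r) := by
  constructor
  · rintro ⟨x, y, h⟩
    refine IsUnit.of_mul_eq_one (AdjoinRoot.mk D y) ?_
    rw [← map_mul, ← map_one (AdjoinRoot.mk D), AdjoinRoot.mk_eq_mk, ← h]
    exact ⟨-x, by ring⟩
  · intro h
    obtain ⟨y, hy⟩ := h.exists_right_inv
    obtain ⟨y, rfl⟩ := AdjoinRoot.mk_surjective y
    rw [← map_mul, ← map_one (AdjoinRoot.mk D), AdjoinRoot.mk_eq_mk] at hy
    obtain ⟨x, hx⟩ := hy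
    exact ⟨-x, y, by linear_combination hx⟩

lemma exists_monic_mul_isCoprime {k : Type*} [Field k] {A B : k[X]} (hA : A.Monic)
    (hB : B.Monic) : ∃ G A' B' : k[X],
      G.Monic ∧ A'.Monic ∧ B'.Monic ∧ A = G * A' ∧ B = G * B' ∧ IsCoprime A' B' := by
  obtain ⟨x, y, hx, hy, hxy⟩ := extract_gcd A B
  have hg : gcd A B ≠ 0 := fun h0 ↦ hA.ne_zero (by rw [hx, h0, zero_mul])
  generalize gcd A B = g at hx hy hg
  have hl := leadingCoeff_ne_zero.mpr hg
  have hG := monic_mul_leadingCoeff_inv hg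
  have hscale (z : k[X]) : g * z = g * C g.leadingCoeff⁻¹ * (C g.leadingCoeff * z) := by
    rw [mul_assoc, ← mul_assoc (C _) (C _), ← C_mul, inv_mul_cancel₀ hl, C_1, one_mul]
  have hxG := hx.trans (hscale x)
  have hyG := hy.trans (hscale y)
  exact ⟨_, _, _, hG, hG.of_mul_monic_left (hxG ▸ hA), hG.of_mul_monic_left (hyG ▸ hB), hxG, hyG,
    (isCoprime_mul_unit_left (isUnit_C.mpr hl.isUnit) _ _).mpr ((gcd_isUnit_iff _ _).mp hxy)⟩

lemma monic_factor_unique_of_isCoprime {R : Type*} [CommRing R] [IsDomain R]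
    {G G' A B A' B' : R[X]} (hG : G.Monic) (hG' : G'.Monic) (hAB : IsCoprime A B)
    (hAB' : IsCoprime A' B') (hA : G * A = G' * A') (hB : G * B = G' * B') : G = G' := by
  refine eq_of_monic_of_associated hG hG' (associated_of_dvd_dvd ?_ ?_)
  · obtain ⟨x, y, hxy⟩ := hAB'
    exact ⟨x * A + y * B, by linear_combination (-G') * hxy - x * hA - y * hB⟩
  · obtain ⟨x, y, hxy⟩ := hAB
    exact ⟨x * A' + y * B', by linear_combination (-G) * hxy + x * hA + y * hB⟩

end Coprime

/-! ### Counting polynomials over a finite field -/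

section FiniteField

variable {k : Type*} [Field k] [Fintype k]

/-- The set of monic polynomials of degree `d` over the finite field `k`. -/
def monicsOfDegree (k : Type*) [Field k] [Fintype k] (d : ℕ) : Finset k[X] :=
  Finset.univ.image fun v : Fin d → k ↦ X ^ d + tailPoly d v

lemma mem_monicsOfDegree {d : ℕ} {F : k[X]} :
    F ∈ monicsOfDegree k d ↔ F.Monic ∧ F.natDegree = d := by
  simp only [monicsOfDegree, Finset.mem_image, Finset.mem_univ, true_and]
  constructor
  · rintro ⟨v, rfl⟩
    refine ⟨monic_X_pow_add (degree_tailPoly_lt v), natDegree_eq_of_degree_eq_some ?_⟩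
    rw [degree_add_eq_left_of_degree_lt, degree_X_pow]
    rw [degree_X_pow]
    exact degree_tailPoly_lt v
  · rintro ⟨hF, rfl⟩
    obtain ⟨v, hv⟩ := exists_tailPoly_eq (f := F - X ^ F.natDegree) (n := F.natDegree) <| by
      rw [← degree_eq_natDegree hF.ne_zero]
      exact degree_sub_lt_left (by rw [degree_X_pow, degree_eq_natDegree hF.ne_zero]) hF.ne_zero
        (by rw [hF.leadingCoeff, (monic_X_pow _).leadingCoeff])
    exact ⟨v, by rw [hv, add_sub_cancel]⟩

lemma sum_monicsOfDegree (d : ℕ) (h : k[X] → ℝ) :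
    ∑ F ∈ monicsOfDegree k d, h F = ∑ v, h (X ^ d + tailPoly d v) :=
  Finset.sum_image fun _ _ _ _ e ↦ tailPoly_injective (add_left_cancel e)

lemma card_monicsOfDegree (d : ℕ) : (monicsOfDegree k d).card = Fintype.card k ^ d := by
  rw [monicsOfDegree, Finset.card_image_of_injective _
    (fun _ _ e ↦ tailPoly_injective (add_left_cancel e)), Finset.card_univ, Fintype.card_fun,
    Fintype.card_fin]

/-- The proportion of units among the residue classes modulo `D`. -/
def coprimeDensity (D : k[X]) : ℝ :=
  {x : AdjoinRoot D | IsUnit x}.ncard / Nat.card (AdjoinRoot D)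

lemma ncard_setOf_isCoprime_add_tailPoly {D : k[X]} {n : ℕ} (hD : D.Monic) (hn : D.natDegree ≤ n)
    (g : k[X]) :
    ({b : Fin n → k | IsCoprime D (g + tailPoly n b)}.ncard : ℝ) =
      coprimeDensity D * Fintype.card k ^ n := by
  have : Module.Finite k (AdjoinRoot D) := (AdjoinRoot.powerBasis' hD).finite
  have : Finite (AdjoinRoot D) := Module.finite_of_finite k
  let f : (Fin n → k) →+ AdjoinRoot D := (AdjoinRoot.mk D).toAddMonoidHom.comp
    (tailPoly (S := k) n).toAddMonoidHom
  have hf : Function.Surjective f := by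
    intro x
    obtain ⟨r, rfl⟩ := AdjoinRoot.mk_surjective x
    obtain ⟨b, hb⟩ := exists_tailPoly_eq (f := r %ₘ D) (n := n) <|
      (degree_modByMonic_lt r hD).trans_le (degree_le_of_natDegree_le hn)
    refine ⟨b, (congrArg (AdjoinRoot.mk D) hb).trans (AdjoinRoot.mk_eq_mk.mpr ?_)⟩
    rw [modByMonic_eq_sub_mul_div]
    exact ⟨-(r /ₘ D), by ring⟩
  have hpre : {b : Fin n → k | IsCoprime D (g + tailPoly n b)} =
      f ⁻¹' ((AdjoinRoot.mk D g + ·) ⁻¹' {x | IsUnit x}) := by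
    ext b
    simp only [Set.mem_ofPred_eq, isCoprime_iff_isUnit_mk, map_add]
    rfl
  rw [hpre, ncard_preimage_of_surjective hf, Set.ncard_preimage_of_injective_subset_range
    (add_right_injective _) fun x _ ↦ add_left_surjective (AdjoinRoot.mk D g) x,
    coprimeDensity, Nat.card_eq_fintype_card (α := Fin n → k), Fintype.card_fun, Fintype.card_fin]
  norm_num

/-- The set of coprime pairs of monic polynomials of degree `d`. -/
def coprimeMonicPairs (k : Type*) [Field k] [Fintype k] (d : ℕ) : Finset (k[X] × k[X]) :=
  (monicsOfDegree k d ×ˢ monicsOfDegree k d).filter fun P ↦ IsCoprime P.1 P.2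

lemma mem_coprimeMonicPairs {d : ℕ} {P : k[X] × k[X]} : P ∈ coprimeMonicPairs k d ↔
    ((P.1.Monic ∧ P.1.natDegree = d) ∧ P.2.Monic ∧ P.2.natDegree = d) ∧ IsCoprime P.1 P.2 := by
  simp only [coprimeMonicPairs, Finset.mem_filter, Finset.mem_product, mem_monicsOfDegree]

lemma sum_pow_mul_card_coprimeMonicPairs (d : ℕ) :
    ∑ i ∈ Finset.range (d + 1), Fintype.card k ^ i * (coprimeMonicPairs k (d - i)).card =
      Fintype.card k ^ (2 * d) := by
  simp only [← card_monicsOfDegree, ← Finset.card_product]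
  rw [← Finset.card_sigma, card_monicsOfDegree, two_mul, pow_add, ← card_monicsOfDegree,
    ← Finset.card_product]
  refine Finset.card_bij (fun x _ ↦ (x.2.1 * x.2.2.1, x.2.1 * x.2.2.2)) ?_ ?_ ?_
  · rintro ⟨i, G, A, B⟩ h
    simp only [Finset.mem_sigma, Finset.mem_range, Finset.mem_product, mem_monicsOfDegree,
      mem_coprimeMonicPairs] at h ⊢
    obtain ⟨hi, ⟨hG, hGd⟩, ⟨⟨hA, hAd⟩, hB, hBd⟩, -⟩ := h
    rw [hG.natDegree_mul hA, hG.natDegree_mul hB]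
    exact ⟨⟨hG.mul hA, by omega⟩, hG.mul hB, by omega⟩
  · rintro ⟨i, G, A, B⟩ h ⟨i', G', A', B'⟩ h' e
    simp only [Finset.mem_sigma, Finset.mem_product, mem_monicsOfDegree,
      mem_coprimeMonicPairs] at h h'
    obtain ⟨-, ⟨hG, rfl⟩, -, hAB⟩ := h
    obtain ⟨-, ⟨hG', rfl⟩, -, hAB'⟩ := h'
    obtain ⟨eA, eB⟩ := Prod.mk.inj e
    obtain rfl := monic_factor_unique_of_isCoprime hG hG' hAB hAB' eA eB
    obtain rfl := mul_left_cancel₀ hG.ne_zero eA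
    obtain rfl := mul_left_cancel₀ hG.ne_zero eB
    rfl
  · rintro ⟨A, B⟩ h
    simp only [Finset.mem_product, mem_monicsOfDegree] at h
    obtain ⟨⟨hA, hAd⟩, hB, hBd⟩ := h
    obtain ⟨G, A', B', hG, hA', hB', rfl, rfl, hAB⟩ := exists_monic_mul_isCoprime hA hB
    rw [hG.natDegree_mul hA'] at hAd
    rw [hG.natDegree_mul hB'] at hBd
    refine ⟨⟨G.natDegree, G, A', B'⟩, ?_, rfl⟩
    simp only [Finset.mem_sigma, Finset.mem_range, Finset.mem_product, mem_monicsOfDegree,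
      mem_coprimeMonicPairs]
    exact ⟨by omega, ⟨hG, trivial⟩, ⟨⟨hA', by omega⟩, hB', by omega⟩, hAB⟩

lemma card_coprimeMonicPairs_zero : (coprimeMonicPairs k 0).card = 1 := by
  simpa using sum_pow_mul_card_coprimeMonicPairs (k := k) 0

lemma card_coprimeMonicPairs_succ (d : ℕ) :
    (coprimeMonicPairs k (d + 1)).card + Fintype.card k ^ (2 * d + 1) =
      Fintype.card k ^ (2 * d + 2) := by
  have h := sum_pow_mul_card_coprimeMonicPairs (k := k) (d + 1)
  rw [Finset.sum_range_succ'] at h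
  simp only [Nat.add_sub_add_right, pow_succ, mul_right_comm _ (Fintype.card k),
    ← Finset.sum_mul, sum_pow_mul_card_coprimeMonicPairs] at h
  linear_combination h

lemma sum_coprimeDensity (d : ℕ) : ∑ D ∈ monicsOfDegree k d, coprimeDensity D =
    (coprimeMonicPairs k d).card / (Fintype.card k : ℝ) ^ d := by
  have hq : (Fintype.card k : ℝ) ^ d ≠ 0 := by
    exact_mod_cast pow_ne_zero d Fintype.card_ne_zero
  rw [eq_div_iff hq, Finset.sum_mul, coprimeMonicPairs, Finset.card_filter, Finset.sum_product,
    Nat.cast_sum]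
  refine Finset.sum_congr rfl fun D hD ↦ ?_
  obtain ⟨hD, hDd⟩ := mem_monicsOfDegree.mp hD
  rw [← ncard_setOf_isCoprime_add_tailPoly hD hDd.le (X ^ d), Set.ncard_eq_toFinset_card',
    Set.toFinset_ofPred, Finset.card_filter]
  push_cast
  exact (sum_monicsOfDegree d fun r ↦ if IsCoprime D r then 1 else 0).symm

lemma sum_coprimeDensity_zero : ∑ D ∈ monicsOfDegree k 0, coprimeDensity D = 1 := by
  rw [sum_coprimeDensity, card_coprimeMonicPairs_zero, Nat.cast_one, pow_zero, div_one]

lemma sum_coprimeDensity_succ (d : ℕ) : ∑ D ∈ monicsOfDegree k (d + 1), coprimeDensity D =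
    (Fintype.card k : ℝ) ^ (d + 1) - (Fintype.card k : ℝ) ^ d := by
  have hq : (Fintype.card k : ℝ) ≠ 0 := by exact_mod_cast Fintype.card_ne_zero
  have h : ((coprimeMonicPairs k (d + 1)).card + Fintype.card k ^ (2 * d + 1) : ℝ) =
      Fintype.card k ^ (2 * d + 2) := by exact_mod_cast card_coprimeMonicPairs_succ d
  rw [sum_coprimeDensity, div_eq_iff (pow_ne_zero _ hq)]
  linear_combination h

end FiniteField

section SquarePartSums

variable {k : Type*} [Field k] [Fintype k]

/-- The set of squarefree monic polynomials of degree `d` over the finite field `k`. -/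
def squarefreeMonics (k : Type*) [Field k] [Fintype k] (d : ℕ) : Finset k[X] :=
  (monicsOfDegree k d).filter Squarefree

lemma mem_squarefreeMonics {d : ℕ} {F : k[X]} :
    F ∈ squarefreeMonics k d ↔ (F.Monic ∧ F.natDegree = d) ∧ Squarefree F := by
  rw [squarefreeMonics, Finset.mem_filter, mem_monicsOfDegree]

lemma sum_comp_squarePart (d : ℕ) (f : k[X] → ℝ) :
    ∑ F ∈ monicsOfDegree k d, f (squarePart F) = ∑ j ∈ Finset.range (d / 2 + 1),
      (squarefreeMonics k (d - 2 * j)).card * ∑ D ∈ monicsOfDegree k j, f D := by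
  have hprod (j : ℕ) : (squarefreeMonics k (d - 2 * j)).card * ∑ D ∈ monicsOfDegree k j, f D =
      ∑ P ∈ squarefreeMonics k (d - 2 * j) ×ˢ monicsOfDegree k j, f P.2 := by
    simp only [Finset.sum_product, Finset.sum_const, nsmul_eq_mul]
  simp only [hprod]
  rw [Finset.sum_sigma']
  symm
  refine Finset.sum_bij (fun x _ ↦ x.2.1 * x.2.2 ^ 2) ?_ ?_ ?_ ?_
  · rintro ⟨j, B, D⟩ h
    simp only [Finset.mem_sigma, Finset.mem_range, Finset.mem_product, mem_squarefreeMonics,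
      mem_monicsOfDegree] at h ⊢
    obtain ⟨hj, ⟨⟨hB, hBd⟩, -⟩, hD, hDd⟩ := h
    refine ⟨hB.mul (hD.pow 2), ?_⟩
    rw [hB.natDegree_mul (hD.pow 2), hD.natDegree_pow]
    omega
  · rintro ⟨j, B, D⟩ h ⟨j', B', D'⟩ h' e
    simp only [Finset.mem_sigma, Finset.mem_product, mem_squarefreeMonics,
      mem_monicsOfDegree] at h h' e
    obtain ⟨-, ⟨-, hB⟩, hD, rfl⟩ := h
    obtain ⟨-, ⟨-, hB'⟩, hD', rfl⟩ := h'
    obtain rfl : D = D' := by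
      rw [← squarePart_mul_sq hB hD, e, squarePart_mul_sq hB' hD']
    obtain rfl := mul_right_cancel₀ (pow_ne_zero 2 hD.ne_zero) e
    rfl
  · intro F h
    obtain ⟨hF, rfl⟩ := mem_monicsOfDegree.mp h
    obtain ⟨B, hB, hBm, hdeg, hBF⟩ := exists_monic_eq_mul_squarePart_sq hF
    refine ⟨⟨(squarePart F).natDegree, B, squarePart F⟩, ?_, hBF.symm⟩
    simp only [Finset.mem_sigma, Finset.mem_range, Finset.mem_product, mem_squarefreeMonics,
      mem_monicsOfDegree]
    exact ⟨by omega, ⟨⟨hBm, by omega⟩, hB⟩, monic_squarePart F, trivial⟩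
  · rintro ⟨j, B, D⟩ h
    simp only [Finset.mem_sigma, Finset.mem_product, mem_squarefreeMonics,
      mem_monicsOfDegree] at h
    rw [squarePart_mul_sq h.2.1.2 h.2.2.1]

lemma sum_card_squarefreeMonics_mul_pow (d : ℕ) :
    ∑ j ∈ Finset.range (d / 2 + 1),
      (squarefreeMonics k (d - 2 * j)).card * (Fintype.card k : ℝ) ^ j = Fintype.card k ^ d := by
  have h := sum_comp_squarePart (k := k) d fun _ ↦ 1
  simp only [Finset.sum_const, nsmul_eq_mul, mul_one, card_monicsOfDegree, Nat.cast_pow] at h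
  exact h.symm

lemma sum_coprimeDensity_squarePart_of_lt_two {d : ℕ} (hd : d < 2) :
    ∑ F ∈ monicsOfDegree k d, coprimeDensity (squarePart F) = Fintype.card k ^ d := by
  rw [sum_comp_squarePart, ← sum_card_squarefreeMonics_mul_pow, Nat.div_eq_of_lt hd]
  simp only [zero_add, Finset.sum_range_one, sum_coprimeDensity_zero, pow_zero]

lemma sum_coprimeDensity_squarePart_add_two (d : ℕ) :
    ∑ F ∈ monicsOfDegree k (d + 2), coprimeDensity (squarePart F) =
      (Fintype.card k : ℝ) ^ (d + 2) - (Fintype.card k : ℝ) ^ d := by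
  have hd (j : ℕ) : d + 2 - 2 * (j + 1) = d - 2 * j := by omega
  rw [sum_comp_squarePart, ← sum_card_squarefreeMonics_mul_pow (d + 2),
    ← sum_card_squarefreeMonics_mul_pow d, Nat.add_div_right d two_pos,
    Finset.sum_range_succ', Finset.sum_range_succ' _ (d / 2 + 1)]
  simp only [hd, sum_coprimeDensity_succ, sum_coprimeDensity_zero, mul_sub,
    Finset.sum_sub_distrib, pow_zero]
  ring

lemma sum_range_sum_coprimeDensity_squarePart (d : ℕ) :
    ∑ i ∈ Finset.range (d + 2), ∑ F ∈ monicsOfDegree k i, coprimeDensity (squarePart F) =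
      (Fintype.card k : ℝ) ^ (d + 1) + (Fintype.card k : ℝ) ^ d := by
  induction d with
  | zero =>
    rw [Finset.sum_range_succ, Finset.sum_range_one,
      sum_coprimeDensity_squarePart_of_lt_two two_pos,
      sum_coprimeDensity_squarePart_of_lt_two one_lt_two, zero_add, add_comm]
  | succ d ih =>
    rw [Finset.sum_range_succ, ih, sum_coprimeDensity_squarePart_add_two]
    ring

lemma sum_range_sum_coprimeDensity (m : ℕ) :
    ∑ j ∈ Finset.range (m + 1), ∑ D ∈ monicsOfDegree k j, coprimeDensity D =
      (Fintype.card k : ℝ) ^ m := by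
  simp only [Finset.sum_range_succ', sum_coprimeDensity_succ, sum_coprimeDensity_zero,
    Finset.sum_range_sub, pow_zero, sub_add_cancel]

lemma sum_monicsOfDegree_ite_isEvenlyRamified (m : ℕ) (f : k[X] → ℝ) :
    ∑ F ∈ monicsOfDegree k (2 * m), (if IsEvenlyRamified F then f (squarePart F) else 0) =
      ∑ D ∈ monicsOfDegree k m, f D := by
  rw [← Finset.sum_filter]
  symm
  refine Finset.sum_bij (fun D _ ↦ D ^ 2) ?_ ?_ ?_ ?_
  · intro D h
    obtain ⟨hD, rfl⟩ := mem_monicsOfDegree.mp h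
    exact Finset.mem_filter.mpr
      ⟨mem_monicsOfDegree.mpr ⟨hD.pow 2, hD.natDegree_pow 2⟩, .sq D⟩
  · intro D h D' h' e
    rw [← squarePart_sq (mem_monicsOfDegree.mp h).1, e,
      squarePart_sq (mem_monicsOfDegree.mp h').1]
  · intro F h
    obtain ⟨h, hE⟩ := Finset.mem_filter.mp h
    obtain ⟨hF, hFd⟩ := mem_monicsOfDegree.mp h
    have hsq := hE.eq_squarePart_sq hF
    have hD := monic_squarePart F
    refine ⟨squarePart F, mem_monicsOfDegree.mpr ⟨hD, ?_⟩, hsq.symm⟩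
    rw [hsq, hD.natDegree_pow] at hFd
    omega
  · intro D h
    rw [squarePart_sq (mem_monicsOfDegree.mp h).1]

lemma sum_range_sum_monicsOfDegree_ite_isEvenlyRamified (m : ℕ) (f : k[X] → ℝ) :
    ∑ d ∈ Finset.range (2 * m), ∑ F ∈ monicsOfDegree k d,
      (if IsEvenlyRamified F then f (squarePart F) else 0) =
      ∑ j ∈ Finset.range m, ∑ D ∈ monicsOfDegree k j, f D := by
  have hodd (j : ℕ) : ∑ F ∈ monicsOfDegree k (2 * j + 1),
      (if IsEvenlyRamified F then f (squarePart F) else 0) = 0 := by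
    refine Finset.sum_eq_zero fun F h ↦ if_neg fun hE ↦ ?_
    have := hE.even_natDegree
    rw [(mem_monicsOfDegree.mp h).2] at this
    exact Nat.not_even_bit1 j this
  induction m with
  | zero => rfl
  | succ m ih =>
    rw [Nat.mul_succ, Finset.sum_range_succ, Finset.sum_range_succ, hodd, ih, add_zero,
      sum_monicsOfDegree_ite_isEvenlyRamified, Finset.sum_range_succ]

end SquarePartSums

section ReducedForms

variable {k : Type*} [Field k] [Fintype k] {n : ℕ} {h : k[X] → ℝ}

lemma sum_C_mul_X_pow_add_tailPoly (hC : ∀ u ≠ 0, ∀ F, h (C u * F) = h F) {u : k} (hu : u ≠ 0) :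
    ∑ v, h (C u * X ^ n + tailPoly n v) = ∑ F ∈ monicsOfDegree k n, h F := by
  rw [sum_monicsOfDegree, ← Equiv.sum_comp (MulAction.toPerm (Units.mk0 u hu))]
  refine Finset.sum_congr rfl fun v _ ↦ ?_
  rw [← hC u hu (X ^ n + tailPoly n v), mul_add, ← smul_eq_C_mul (p := tailPoly n v), ← map_smul]
  rfl

lemma sum_tailPoly (h0 : h 0 = 0) (hC : ∀ u ≠ 0, ∀ F, h (C u * F) = h F) :
    ∑ v, h (tailPoly n v) =
      (Fintype.card k - 1) * ∑ d ∈ Finset.range n, ∑ F ∈ monicsOfDegree k d, h F := by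
  induction n with
  | zero => simp [tailPoly, h0]
  | succ n ih =>
    rw [← (Fin.consEquiv fun _ ↦ k).sum_comp, Fintype.sum_prod_type,
      ← Finset.add_sum_erase _ _ (Finset.mem_univ 0), Finset.sum_range_succ, mul_add, ← ih]
    have hne (u : k) (hu : u ∈ Finset.univ.erase 0) :
        ∑ v, h (tailPoly (n + 1) (Fin.cons u v)) = ∑ F ∈ monicsOfDegree k n, h F := by
      simp only [tailPoly_cons, sum_C_mul_X_pow_add_tailPoly hC (Finset.ne_of_mem_erase hu)]
    have h0 : ∑ v, h (tailPoly (n + 1) (Fin.cons 0 v)) = ∑ v, h (tailPoly n v) := by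
      simp only [tailPoly_cons, C_0, zero_mul, zero_add]
    refine congrArg₂ (· + ·) h0 ((Finset.sum_congr rfl hne).trans ?_)
    rw [Finset.sum_const, Finset.card_erase_of_mem (Finset.mem_univ 0), Finset.card_univ,
      nsmul_eq_mul, Nat.cast_pred Fintype.card_pos]

end ReducedForms

section SquarePartSum

variable {k : Type*} [Field k] [Fintype k]

/-- The sum of `f (squarePart F)` over the nonzero polynomials `F = u * X ^ n + …` that have the
property `E`; for `u = 0` these are all nonzero polynomials of degree less than `n`. -/
def squarePartSum (E : k[X] → Prop) (f : k[X] → ℝ) (n : ℕ) (u : k) : ℝ :=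
  ∑ v, if C u * X ^ n + tailPoly n v ≠ 0 ∧ E (C u * X ^ n + tailPoly n v) then
    f (squarePart (C u * X ^ n + tailPoly n v)) else 0

variable {E : k[X] → Prop} {f : k[X] → ℝ} {n : ℕ}

lemma sum_monicsOfDegree_ite_ne_zero_and (d : ℕ) :
    ∑ F ∈ monicsOfDegree k d, (if F ≠ 0 ∧ E F then f (squarePart F) else 0) =
      ∑ F ∈ monicsOfDegree k d, if E F then f (squarePart F) else 0 :=
  Finset.sum_congr rfl fun F hF ↦ by
    simp only [(mem_monicsOfDegree.mp hF).1.ne_zero, ne_eq, not_false_eq_true, true_and]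

lemma squarePartSum_of_ne_zero (hE : ∀ u ≠ 0, ∀ F, E (C u * F) ↔ E F) {u : k} (hu : u ≠ 0) :
    squarePartSum E f n u =
      ∑ F ∈ monicsOfDegree k n, if E F then f (squarePart F) else 0 := by
  rw [← sum_monicsOfDegree_ite_ne_zero_and]
  refine sum_C_mul_X_pow_add_tailPoly
    (h := fun F ↦ if F ≠ 0 ∧ E F then f (squarePart F) else 0) (fun u hu F ↦ ?_) hu
  simp only [squarePart_C_mul hu, hE u hu, ne_eq, mul_eq_zero, C_eq_zero, hu, false_or]

lemma squarePartSum_zero (hE : ∀ u ≠ 0, ∀ F, E (C u * F) ↔ E F) :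
    squarePartSum E f n 0 = (Fintype.card k - 1) * ∑ d ∈ Finset.range n,
      ∑ F ∈ monicsOfDegree k d, if E F then f (squarePart F) else 0 := by
  simp only [← sum_monicsOfDegree_ite_ne_zero_and, squarePartSum, C_0, zero_mul, zero_add]
  refine sum_tailPoly (h := fun F ↦ if F ≠ 0 ∧ E F then f (squarePart F) else 0)
    (if_neg fun h ↦ h.1 rfl) (fun u hu F ↦ ?_)
  simp only [squarePart_C_mul hu, hE u hu, ne_eq, mul_eq_zero, C_eq_zero, hu, false_or]

lemma squarePartSum_true_one_of_ne_zero {u : k} (hu : u ≠ 0) :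
    squarePartSum (fun _ ↦ True) (fun _ ↦ 1) n u = (Fintype.card k : ℝ) ^ n := by
  rw [squarePartSum_of_ne_zero (fun _ _ _ ↦ Iff.rfl) hu]
  simp only [if_true, Finset.sum_const, card_monicsOfDegree, nsmul_one, Nat.cast_pow]

lemma squarePartSum_true_one_zero :
    squarePartSum (fun _ ↦ True) (fun _ ↦ 1) n (0 : k) = (Fintype.card k : ℝ) ^ n - 1 := by
  rw [squarePartSum_zero fun _ _ _ ↦ Iff.rfl]
  simp only [if_true, Finset.sum_const, card_monicsOfDegree, nsmul_one, Nat.cast_pow,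
    mul_geom_sum]

lemma squarePartSum_isEvenlyRamified_one_of_ne_zero (m : ℕ) {u : k} (hu : u ≠ 0) :
    squarePartSum IsEvenlyRamified (fun _ ↦ 1) (2 * m) u = (Fintype.card k : ℝ) ^ m := by
  rw [squarePartSum_of_ne_zero (fun _ hu _ ↦ isEvenlyRamified_C_mul_iff hu) hu,
    sum_monicsOfDegree_ite_isEvenlyRamified m fun _ ↦ 1]
  simp only [Finset.sum_const, card_monicsOfDegree, nsmul_one, Nat.cast_pow]

lemma squarePartSum_isEvenlyRamified_one_zero (m : ℕ) :
    squarePartSum IsEvenlyRamified (fun _ ↦ 1) (2 * m) (0 : k) =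
      (Fintype.card k : ℝ) ^ m - 1 := by
  rw [squarePartSum_zero fun _ hu _ ↦ isEvenlyRamified_C_mul_iff hu,
    sum_range_sum_monicsOfDegree_ite_isEvenlyRamified m fun _ ↦ 1]
  simp only [Finset.sum_const, card_monicsOfDegree, nsmul_one, Nat.cast_pow, mul_geom_sum]

lemma squarePartSum_true_coprimeDensity (d : ℕ) (u : k) :
    squarePartSum (fun _ ↦ True) coprimeDensity (d + 2) u =
      (Fintype.card k : ℝ) ^ (d + 2) - (Fintype.card k : ℝ) ^ d := by
  obtain rfl | hu := eq_or_ne u 0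
  · rw [squarePartSum_zero fun _ _ _ ↦ Iff.rfl]
    simp only [if_true, sum_range_sum_coprimeDensity_squarePart]
    ring
  · rw [squarePartSum_of_ne_zero (fun _ _ _ ↦ Iff.rfl) hu]
    simp only [if_true, sum_coprimeDensity_squarePart_add_two]

lemma squarePartSum_isEvenlyRamified_coprimeDensity (m : ℕ) (u : k) :
    squarePartSum IsEvenlyRamified coprimeDensity (2 * (m + 1)) u =
      (Fintype.card k : ℝ) ^ (m + 1) - (Fintype.card k : ℝ) ^ m := by
  obtain rfl | hu := eq_or_ne u 0
  · rw [squarePartSum_zero fun _ hu _ ↦ isEvenlyRamified_C_mul_iff hu,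
      sum_range_sum_monicsOfDegree_ite_isEvenlyRamified, sum_range_sum_coprimeDensity]
    ring
  · rw [squarePartSum_of_ne_zero (fun _ hu _ ↦ isEvenlyRamified_C_mul_iff hu) hu,
      sum_monicsOfDegree_ite_isEvenlyRamified, sum_coprimeDensity_succ]

end SquarePartSum

/-! ### Densities of `p`-adic forms -/

section Density

variable {p} {n : ℕ} {f₀ : ℤ_[p]}

lemma toZMod_comp_add_p_smul (l w : Fin n → ℤ_[p]) :
    PadicInt.toZMod ∘ (l + (p : ℤ_[p]) • w) = PadicInt.toZMod ∘ l := by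
  funext i
  simp

lemma exists_isMaxOrder_iff_isCoprime_squarePart (h0 : ¬ (p : ℤ_[p]) ^ 2 ∣ f₀)
    {l : Fin n → ℤ_[p]} (hl : (formPoly n (consF0 p n f₀ l)).map PadicInt.toZMod ≠ 0) :
    ∃ g : (ZMod p)[X], ∀ w, consF0 p n f₀ (l + (p : ℤ_[p]) • w) n ≠ 0 →
      (IsMaxOrder ℤ_[p] ℚ_[p] n (consF0 p n f₀ (l + (p : ℤ_[p]) • w)) ↔
        IsCoprime (squarePart ((formPoly n (consF0 p n f₀ l)).map PadicInt.toZMod))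
          (g + tailPoly n (PadicInt.toZMod ∘ w))) := by
  obtain ⟨B', hB', hBD⟩ := exists_eq_mul_squarePart_sq hl
  obtain ⟨B, rfl⟩ := Polynomial.map_surjective _ toZMod_surjective B'
  obtain ⟨D, hD⟩ := Polynomial.map_surjective _ toZMod_surjective
    (squarePart ((formPoly n (consF0 p n f₀ l)).map PadicInt.toZMod))
  rw [← hD] at hBD ⊢
  obtain ⟨G, hG⟩ := (polynomial_map_eq_zero_iff_C_dvd toZMod_surjective
    PadicInt.irreducible_p).mp (show (formPoly n (consF0 p n f₀ l) - B * D ^ 2).map _ = 0 by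
      rw [Polynomial.map_sub, hBD, Polynomial.map_mul, Polynomial.map_pow, sub_self])
  have hform (w : Fin n → ℤ_[p]) : formPoly n (consF0 p n f₀ (l + (p : ℤ_[p]) • w)) =
      B * D ^ 2 + C (p : ℤ_[p]) * (G + tailPoly n w) := by
    rw [formPoly_consF0] at hG ⊢
    rw [map_add, map_smul, smul_eq_C_mul]
    linear_combination hG
  refine ⟨G.map PadicInt.toZMod, fun w hw ↦ ?_⟩
  have hred : (formPoly n (consF0 p n f₀ (l + (p : ℤ_[p]) • w))).map PadicInt.toZMod ≠ 0 := by
    rwa [map_formPoly_consF0, toZMod_comp_add_p_smul, ← map_formPoly_consF0]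
  rw [isMaxOrder_iff_isCoprime toZMod_surjective PadicInt.irreducible_p
    (by rwa [consF0_zero]) hw hred (hform w) hB', Polynomial.map_add, map_tailPoly]

lemma haarP_primP (hn : n ≠ 0) (hf₀ : f₀ ≠ 0) (E : (ZMod p)[X] → Prop) :
    (haarP p n {v | SepDegP p n (consF0 p n f₀ v) ∧ PrimP p n (consF0 p n f₀ v) ∧
      E ((formPoly n (consF0 p n f₀ v)).map PadicInt.toZMod)}).toReal =
      squarePartSum E (fun _ ↦ 1) n (PadicInt.toZMod f₀) / p ^ n := by
  obtain ⟨L, hL⟩ := toZMod_surjective (p := p) |>.comp_left (α := Fin n) |>.hasRightInverse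
  let F (a : Fin n → ZMod p) := C (PadicInt.toZMod f₀) * X ^ n + tailPoly n a
  rw [haarP_eq_sum_of_digits hL (T := fun a ↦ {_b | F a ≠ 0 ∧ E (F a)})]
  · refine congrArg (· / _) (Finset.sum_congr rfl fun a _ ↦ ?_)
    split_ifs with h
    · simp [F, h, Set.ncard_univ, NeZero.ne p]
    · simp [F, h]
  · filter_upwards [ae_sepDegP hn hf₀] with v hv a w hvw
    have hred : PadicInt.toZMod ∘ v = a := by rw [hvw, toZMod_comp_add_p_smul]; exact hL a
    simp only [hv, true_and, primP_iff, map_formPoly_consF0, hred, F]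

lemma haarP_isMaxOrder (hn : n ≠ 0) (h0 : ¬ (p : ℤ_[p]) ^ 2 ∣ f₀)
    (E : (ZMod p)[X] → Prop) :
    (haarP p n {v | SepDegP p n (consF0 p n f₀ v) ∧ PrimP p n (consF0 p n f₀ v) ∧
      IsMaxOrder ℤ_[p] ℚ_[p] n (consF0 p n f₀ v) ∧
      E ((formPoly n (consF0 p n f₀ v)).map PadicInt.toZMod)}).toReal =
      squarePartSum E coprimeDensity n (PadicInt.toZMod f₀) / p ^ n := by
  have hf₀ : f₀ ≠ 0 := fun h ↦ h0 (h ▸ dvd_zero _)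
  obtain ⟨L, hL⟩ := toZMod_surjective (p := p) |>.comp_left (α := Fin n) |>.hasRightInverse
  let F (a : Fin n → ZMod p) := C (PadicInt.toZMod f₀) * X ^ n + tailPoly n a
  have hFL (a) : (formPoly n (consF0 p n f₀ (L a))).map PadicInt.toZMod = F a := by
    rw [map_formPoly_consF0]
    exact congrArg (_ + tailPoly n ·) (hL a)
  have hFdeg (a) : (F a).natDegree ≤ n :=
    hFL a ▸ natDegree_map_le.trans (natDegree_formPoly_le n _)
  choose! g hg using fun a (ha : F a ≠ 0) ↦
    exists_isMaxOrder_iff_isCoprime_squarePart h0 ((hFL a).trans_ne ha)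
  rw [haarP_eq_sum_of_digits hL (T := fun a ↦
    {b | (F a ≠ 0 ∧ E (F a)) ∧ IsCoprime (squarePart (F a)) (g a + tailPoly n b)})]
  · refine congrArg (· / _) (Finset.sum_congr rfl fun a _ ↦ ?_)
    split_ifs with h
    · have hdeg : (squarePart (F a)).natDegree ≤ n := (natDegree_squarePart_le h.1).trans (hFdeg a)
      have hp : (p : ℝ) ^ n ≠ 0 := pow_ne_zero n (NeZero.ne _)
      simp only [h, ne_eq, not_false_eq_true, and_self, true_and, F] at hdeg ⊢
      rw [ncard_setOf_isCoprime_add_tailPoly (monic_squarePart _) hdeg, ZMod.card,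
        mul_div_cancel_right₀ _ hp]
    · simp [F, h]
  · filter_upwards [ae_sepDegP hn hf₀, ae_consF0_last_ne_zero hn] with v hv hvn a w hvw
    have hred : PadicInt.toZMod ∘ v = a := by rw [hvw, toZMod_comp_add_p_smul]; exact hL a
    simp only [hv, true_and, primP_iff, map_formPoly_consF0, hred]
    by_cases ha : F a = 0
    · simp only [F, ha, ne_eq, not_true_eq_false, false_and]
    · rw [hvw, hg a ha w (hvw ▸ hvn), hFL]
      tauto

lemma densIn_evenRamP_primP (hn : n ≠ 0) (heven : Even n) (hf₀ : f₀ ≠ 0) :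
    densIn p n
      {v | SepDegP p n (consF0 p n f₀ v) ∧ PrimP p n (consF0 p n f₀ v) ∧
        EvenRamP p n (consF0 p n f₀ v)}
      {v | SepDegP p n (consF0 p n f₀ v) ∧ PrimP p n (consF0 p n f₀ v)} =
      squarePartSum IsEvenlyRamified (fun _ ↦ 1) n (PadicInt.toZMod f₀) /
        squarePartSum (fun _ ↦ True) (fun _ ↦ 1) n (PadicInt.toZMod f₀) := by
  have hall := haarP_primP hn hf₀ fun _ ↦ True
  have hE := haarP_primP hn hf₀ IsEvenlyRamified
  simp only [and_true] at hall
  simp only [densIn, evenRamP_iff heven, hall, hE]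
  exact div_div_div_cancel_right₀ (pow_ne_zero n (NeZero.ne _)) _ _

lemma densIn_evenRamP_isMaxOrder (hn : n ≠ 0) (heven : Even n) (h0 : ¬ (p : ℤ_[p]) ^ 2 ∣ f₀) :
    densIn p n
      {v | SepDegP p n (consF0 p n f₀ v) ∧ PrimP p n (consF0 p n f₀ v) ∧
        IsMaxOrder ℤ_[p] ℚ_[p] n (consF0 p n f₀ v) ∧ EvenRamP p n (consF0 p n f₀ v)}
      {v | SepDegP p n (consF0 p n f₀ v) ∧ PrimP p n (consF0 p n f₀ v) ∧
        IsMaxOrder ℤ_[p] ℚ_[p] n (consF0 p n f₀ v)} =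
      squarePartSum IsEvenlyRamified coprimeDensity n (PadicInt.toZMod f₀) /
        squarePartSum (fun _ ↦ True) coprimeDensity n (PadicInt.toZMod f₀) := by
  have hall := haarP_isMaxOrder hn h0 fun _ ↦ True
  have hE := haarP_isMaxOrder hn h0 IsEvenlyRamified
  simp only [and_true] at hall
  simp only [densIn, evenRamP_iff heven, hall, hE]
  exact div_div_div_cancel_right₀ (pow_ne_zero n (NeZero.ne _)) _ _

lemma haarP_evenRamP_isMaxOrder_eq_zero (hn : n ≠ 0) (heven : Even n) (hf₀ : f₀ ≠ 0)
    (h0 : (p : ℤ_[p]) ^ 2 ∣ f₀) :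
    haarP p n {v | SepDegP p n (consF0 p n f₀ v) ∧ PrimP p n (consF0 p n f₀ v) ∧
      IsMaxOrder ℤ_[p] ℚ_[p] n (consF0 p n f₀ v) ∧ EvenRamP p n (consF0 p n f₀ v)} = 0 := by
  refine measure_eq_zero_iff_ae_notMem.mpr ?_
  filter_upwards [ae_consF0_last_ne_zero hn] with v hv
  rintro ⟨-, hP, hM, hE⟩
  exact not_isMaxOrder_of_isEvenlyRamified hn heven (by rwa [consF0_zero]) hv
    (by rwa [consF0_zero]) (primP_iff.mp hP) ((evenRamP_iff heven).mp hE) hM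

end Density

section Quotients

variable {q : ℝ}

lemma pow_sub_one_div_pow_two_mul_sub_one (hq : 1 < q) {m : ℕ} (hm : m ≠ 0) :
    (q ^ m - 1) / (q ^ (2 * m) - 1) = (q ^ m + 1)⁻¹ := by
  have h := one_lt_pow₀ hq hm
  have hfac : q ^ (2 * m) - 1 = (q ^ m - 1) * (q ^ m + 1) := by ring
  rw [hfac, div_mul_cancel_left₀ (sub_pos.mpr h).ne']

lemma pow_succ_sub_pow_div_pow_two_mul_succ_sub_pow (hq : 1 < q) (m : ℕ) :
    (q ^ (m + 1) - q ^ m) / (q ^ (2 * m + 2) - q ^ (2 * m)) =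
      (q ^ (m + 1))⁻¹ * (1 + q⁻¹)⁻¹ := by
  have hq0 : q ≠ 0 := (one_pos.trans hq).ne'
  have hfac : q ^ (2 * m + 2) - q ^ (2 * m) =
      (q ^ (m + 1) - q ^ m) * (q ^ (m + 1) * (1 + q⁻¹)) := by
    field_simp
    ring
  have hne : q ^ (m + 1) - q ^ m ≠ 0 := by
    rw [pow_succ, ← mul_sub_one]
    exact mul_ne_zero (pow_ne_zero m hq0) (sub_ne_zero.mpr hq.ne')
  rw [hfac, div_mul_cancel_left₀ hne, mul_inv]

end Quotients

/-- Theorem 3.6: densities of evenly ramified forms among separable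
primitive forms, and among forms cutting out the maximal order. -/
theorem evenly_ramified_densities
    (p : ℕ) [Fact p.Prime]
    (n : ℕ) (hn : 4 ≤ n) (heven : Even n)
    (f0 : ℤ_[p]) (hf0 : f0 ≠ 0) :
    (¬ (p : ℤ_[p]) ∣ f0 →
      densIn p n
        {v | SepDegP p n (consF0 p n f0 v) ∧ PrimP p n (consF0 p n f0 v) ∧
          EvenRamP p n (consF0 p n f0 v)}
        {v | SepDegP p n (consF0 p n f0 v) ∧ PrimP p n (consF0 p n f0 v)} =
        ((p : ℝ) ^ (n / 2))⁻¹) ∧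
    ((p : ℤ_[p]) ∣ f0 →
      densIn p n
        {v | SepDegP p n (consF0 p n f0 v) ∧ PrimP p n (consF0 p n f0 v) ∧
          EvenRamP p n (consF0 p n f0 v)}
        {v | SepDegP p n (consF0 p n f0 v) ∧ PrimP p n (consF0 p n f0 v)} =
        ((p : ℝ) ^ (n / 2) + 1)⁻¹) ∧
    (¬ (p : ℤ_[p]) ^ 2 ∣ f0 →
      densIn p n
        {v | SepDegP p n (consF0 p n f0 v) ∧ PrimP p n (consF0 p n f0 v) ∧
          IsMaxOrder ℤ_[p] ℚ_[p] n (consF0 p n f0 v) ∧ EvenRamP p n (consF0 p n f0 v)}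
        {v | SepDegP p n (consF0 p n f0 v) ∧ PrimP p n (consF0 p n f0 v) ∧
          IsMaxOrder ℤ_[p] ℚ_[p] n (consF0 p n f0 v)} =
        ((p : ℝ) ^ (n / 2))⁻¹ * (1 + (p : ℝ)⁻¹)⁻¹) ∧
    ((p : ℤ_[p]) ^ 2 ∣ f0 →
      densIn p n
        {v | SepDegP p n (consF0 p n f0 v) ∧ PrimP p n (consF0 p n f0 v) ∧
          IsMaxOrder ℤ_[p] ℚ_[p] n (consF0 p n f0 v) ∧ EvenRamP p n (consF0 p n f0 v)}
        {v | SepDegP p n (consF0 p n f0 v) ∧ PrimP p n (consF0 p n f0 v) ∧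
          IsMaxOrder ℤ_[p] ℚ_[p] n (consF0 p n f0 v)} = 0) := by
  have hq : (1 : ℝ) < p := by exact_mod_cast (Fact.out : p.Prime).one_lt
  obtain ⟨m, rfl⟩ : ∃ m, n = 2 * (m + 1) := ⟨n / 2 - 1, by grind⟩
  have hn0 : 2 * (m + 1) ≠ 0 := by omega
  rw [Nat.mul_div_cancel_left (m + 1) two_pos]
  refine ⟨fun h ↦ ?_, fun h ↦ ?_, fun h ↦ ?_, fun h ↦ ?_⟩
  · have hu := mt toZMod_eq_zero_iff.mp h
    rw [densIn_evenRamP_primP hn0 heven hf0, squarePartSum_isEvenlyRamified_one_of_ne_zero _ hu,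
      squarePartSum_true_one_of_ne_zero hu, ZMod.card, two_mul, pow_add _ (m + 1) (m + 1)]
    exact div_mul_cancel_left₀ (by positivity) _
  · rw [densIn_evenRamP_primP hn0 heven hf0, toZMod_eq_zero_iff.mpr h,
      squarePartSum_isEvenlyRamified_one_zero, squarePartSum_true_one_zero, ZMod.card]
    exact pow_sub_one_div_pow_two_mul_sub_one hq m.succ_ne_zero
  · rw [densIn_evenRamP_isMaxOrder hn0 heven h, squarePartSum_isEvenlyRamified_coprimeDensity,
      mul_add_one, squarePartSum_true_coprimeDensity, ZMod.card]
    exact pow_succ_sub_pow_div_pow_two_mul_succ_sub_pow hq m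
  · rw [densIn, haarP_evenRamP_isMaxOrder_eq_zero hn0 heven hf0 h, ENNReal.toReal_zero, zero_div]


end BHS
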